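/- arXiv:2210.10411 — 8 statements merged into one kernel-verified Lean document; each statement's English description precedes it below -/
import Mathlib

section
/- Let d ≥ 1, let A be a real d×d matrix, and let n ∈ ℝ^d with ‖n‖ = 1. Then the function t ↦ det(I + tA)·‖((I + tA)⁻¹)ᵀ n‖, which is defined for all t in a neighborhood of 0 (where I + tA is invertible), has derivative at t = 0 equal to trace(A) − ⟨A n, n⟩. -/
open MeasureTheory RealInnerProductSpace Matrix


attribute [local instance] Matrix.linftyOpNormedRing Matrix.linftyOpNormedAlgebra in
lemma inv_aux (d : ℕ) (A : Matrix (Fin d) (Fin d) ℝ)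
    (L : Matrix (Fin d) (Fin d) ℝ →ₗ[ℝ] EuclideanSpace ℝ (Fin d)) :
    HasDerivAt (fun t : ℝ => L ((1 + t • A)⁻¹)) (L (-A)) 0 := by
  have : CompleteSpace (Matrix (Fin d) (Fin d) ℝ) := FiniteDimensional.complete ℝ _
  have h1 : HasDerivAt (fun t : ℝ => 1 + t • A) A 0 := by
    have h := ((hasDerivAt_id (0:ℝ)).smul_const A).const_add (1 : Matrix (Fin d) (Fin d) ℝ)
    rw [one_smul] at h
    exact h
  have h2 := hasFDerivAt_ringInverse (𝕜 := ℝ) (1 : (Matrix (Fin d) (Fin d) ℝ)ˣ)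
  have h3 := HasFDerivAt.comp_hasDerivAt_of_eq (0:ℝ) h2 h1 (by simp)
  have h4 := (LinearMap.toContinuousLinearMap L).hasFDerivAt.comp_hasDerivAt (0:ℝ) h3
  simp only [Matrix.nonsing_inv_eq_ringInverse]
  convert! h4 using 1
  simp
  exact (map_neg L A).symm

lemma det_aux (d : ℕ) (A : Matrix (Fin d) (Fin d) ℝ) :
    HasDerivAt (fun t : ℝ => (1 + t • A).det) A.trace 0 := by
  rw [funext fun t : ℝ => Matrix.det_one_add_smul t A]
  have h := (((hasDerivAt_id (0:ℝ)).const_mul A.trace).const_add 1).add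
    ((Polynomial.hasDerivAt (Matrix.det (1 + (Polynomial.X : Polynomial ℝ) • A.map Polynomial.C)).divX.divX (0:ℝ)).mul ((hasDerivAt_id (0:ℝ)).pow 2))
  convert! h using 1
  simp

/-- The derivative at `t = 0` of `t ↦ det(I + tA) * ‖((I + tA)⁻¹)ᵀ n‖` for a unit
vector `n` equals `trace A - ⟨A n, n⟩` (formula (4.5) of the paper). -/
theorem stmt_0 (d : ℕ) (hd : 1 ≤ d) (A : Matrix (Fin d) (Fin d) ℝ)
    (n : EuclideanSpace ℝ (Fin d)) (hn : ‖n‖ = 1) :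
    HasDerivAt
      (fun t : ℝ =>
        (1 + t • A).det *
          ‖(EuclideanSpace.equiv (Fin d) ℝ).symm
              (((1 + t • A)⁻¹)ᵀ.mulVec (EuclideanSpace.equiv (Fin d) ℝ n))‖)
      (A.trace -
        ⟪(EuclideanSpace.equiv (Fin d) ℝ).symm
            (A.mulVec (EuclideanSpace.equiv (Fin d) ℝ n)), n⟫)
      0 := by
  let L : Matrix (Fin d) (Fin d) ℝ →ₗ[ℝ] EuclideanSpace ℝ (Fin d) :=
    { toFun := fun M => (EuclideanSpace.equiv (Fin d) ℝ).symm
        (Mᵀ.mulVec (EuclideanSpace.equiv (Fin d) ℝ n))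
      map_add' := fun M N => by
        rw [Matrix.transpose_add, Matrix.add_mulVec, map_add]
      map_smul' := fun c M => by
        rw [Matrix.transpose_smul, Matrix.smul_mulVec, map_smul]; rfl }
  have h1 := inv_aux d A L
  have hL0 : L ((1 + (0:ℝ) • A)⁻¹) = n := by
    simp [L]
    rfl
  have h2 := h1.norm_sq.sqrt (by rw [hL0, hn]; norm_num)
  simp only [Real.sqrt_sq (norm_nonneg _)] at h2
  have h3 := (det_aux d A).mul h2
  convert! h3 using 1
  rw [hL0, hn]
  have : ⟪n, L (-A)⟫ = - ⟪(EuclideanSpace.equiv (Fin d) ℝ).symm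
            (A.mulVec (EuclideanSpace.equiv (Fin d) ℝ n)), n⟫ := by
    rw [map_neg, inner_neg_right]
    congr 1
    simp only [L, LinearMap.coe_mk, AddHom.coe_mk, EuclideanSpace.inner_eq_star_dotProduct]
    simp [Matrix.mulVec_transpose, Matrix.dotProduct_mulVec]
    rfl
  rw [this]
  simp
  ring
end

section
/- Let Ω ⊂ ℝ^d be a bounded measurable set, let V : ℝ^d → ℝ^d be continuously differentiable with bounded derivative (hence Lipschitz), and let f : ℝ^d → ℝ be continuously differentiable and bounded with bounded gradient. For t ∈ ℝ define T_t : ℝ^d → ℝ^d by T_t(x) = x + t·V(x). Then the function t ↦ ∫_{T_t(Ω)} f(x) dx (integral with respect to Lebesgue measure over the image T_t(Ω)) has derivative at t = 0 equal to ∫_Ω ( ⟨V(x), ∇f(x)⟩ + f(x)·div V(x) ) dx, where div V(x) denotes the trace of the Jacobian matrix of V at x. -/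
open MeasureTheory RealInnerProductSpace

open Topology Filter in
theorem aux_contDiff_det (d : ℕ) :
    ContDiff ℝ 1 (fun p : ℝ × (EuclideanSpace ℝ (Fin d) →L[ℝ] EuclideanSpace ℝ (Fin d)) =>
      (ContinuousLinearMap.id ℝ (EuclideanSpace ℝ (Fin d)) + p.1 • p.2).det) := by
  have h : ∀ A : EuclideanSpace ℝ (Fin d) →L[ℝ] EuclideanSpace ℝ (Fin d),
      A.det = ∑ σ : Equiv.Perm (Fin d), ((Equiv.Perm.sign σ : ℤ) : ℝ) *
        ∏ i, (A (EuclideanSpace.basisFun (Fin d) ℝ i)) (σ i) := by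
    intro A
    rw [ContinuousLinearMap.det,
      ← LinearMap.det_toMatrix (EuclideanSpace.basisFun (Fin d) ℝ).toBasis, Matrix.det_apply']
    simp [LinearMap.toMatrix_apply]
  simp_rw [h]
  refine ContDiff.sum fun σ _ => contDiff_const.mul (contDiff_prod fun i _ => ?_)
  have h2 : ContDiff ℝ 1 (fun p : ℝ × (EuclideanSpace ℝ (Fin d) →L[ℝ] EuclideanSpace ℝ (Fin d)) =>
    (ContinuousLinearMap.id ℝ (EuclideanSpace ℝ (Fin d)) + p.1 • p.2)
      (EuclideanSpace.basisFun (Fin d) ℝ i)) := by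
    have : ContDiff ℝ 1 (fun p : ℝ × (EuclideanSpace ℝ (Fin d) →L[ℝ] EuclideanSpace ℝ (Fin d)) =>
      (ContinuousLinearMap.id ℝ (EuclideanSpace ℝ (Fin d)) + p.1 • p.2)) :=
      contDiff_const.add (contDiff_fst.smul contDiff_snd)
    exact this.clm_apply contDiff_const
  exact (contDiff_euclidean.1 h2) (σ i)

theorem aux_deriv_det (d : ℕ) (A : EuclideanSpace ℝ (Fin d) →L[ℝ] EuclideanSpace ℝ (Fin d)) :
    HasDerivAt (fun t : ℝ => (ContinuousLinearMap.id ℝ (EuclideanSpace ℝ (Fin d)) + t • A).det)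
      (LinearMap.trace ℝ (EuclideanSpace ℝ (Fin d)) A.toLinearMap) 0 := by
  set b := (EuclideanSpace.basisFun (Fin d) ℝ).toBasis
  set M := LinearMap.toMatrix b b A.toLinearMap with hM
  have h : ∀ t : ℝ, (ContinuousLinearMap.id ℝ (EuclideanSpace ℝ (Fin d)) + t • A).det
      = (1 + t • M).det := by
    intro t
    rw [ContinuousLinearMap.det, ← LinearMap.det_toMatrix b]
    simp [hM]
  rw [LinearMap.trace_eq_matrix_trace ℝ b]
  have h4 := fun t : ℝ => Matrix.det_one_add_smul t M
  generalize (Polynomial.divX (R := ℝ) (Polynomial.divX _)) = p at h4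
  rw [funext fun t => (h t).trans (h4 t)]
  have h3 := (((hasDerivAt_id (0:ℝ)).const_mul M.trace).const_add 1).add
    ((p.hasDerivAt 0).mul ((hasDerivAt_id (0:ℝ)).pow 2))
  refine HasDerivAt.congr_deriv (f := fun t : ℝ => 1 + M.trace * t + p.eval t * t ^ 2) h3 ?_
  simp [hM]

open Topology Filter in
/-- Formula (4.6a) for a fixed integrand: the derivative at `t = 0` of
`t ↦ ∫_{T_t(Ω)} f`, where `T_t = id + tV`, equals `∫_Ω (⟨V, ∇f⟩ + f · div V)`. -/
theorem stmt_1 (d : ℕ) (Ω : Set (EuclideanSpace ℝ (Fin d)))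
    (hΩm : MeasurableSet Ω) (hΩb : Bornology.IsBounded Ω)
    (V : EuclideanSpace ℝ (Fin d) → EuclideanSpace ℝ (Fin d))
    (hV : ContDiff ℝ 1 V) (CV : ℝ) (hVb : ∀ x, ‖fderiv ℝ V x‖ ≤ CV)
    (f : EuclideanSpace ℝ (Fin d) → ℝ) (hf : ContDiff ℝ 1 f)
    (Cf : ℝ) (hfb : ∀ x, |f x| ≤ Cf)
    (Cg : ℝ) (hgb : ∀ x, ‖gradient f x‖ ≤ Cg) :
    HasDerivAt (fun t : ℝ => ∫ x in (fun x => x + t • V x) '' Ω, f x)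
      (∫ x in Ω,
        (⟪V x, gradient f x⟫ +
          f x * LinearMap.trace ℝ (EuclideanSpace ℝ (Fin d)) (fderiv ℝ V x).toLinearMap))
      0 := by
  let E := EuclideanSpace ℝ (Fin d)
  let h : ℝ × (E →L[ℝ] E) → ℝ := fun p => (ContinuousLinearMap.id ℝ E + p.1 • p.2).det
  have hh : ContDiff ℝ 1 h := aux_contDiff_det d
  have hVd : ∀ x, HasFDerivAt V (fderiv ℝ V x) x := fun x =>
    (hV.differentiable (by norm_num) x).hasFDerivAt
  have hfd : ∀ x, HasFDerivAt f (fderiv ℝ f x) x := fun x =>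
    (hf.differentiable (by norm_num) x).hasFDerivAt
  have hVc : Continuous V := hV.continuous
  have hfc : Continuous f := hf.continuous
  have hV'c : Continuous (fderiv ℝ V) := hV.continuous_fderiv (by norm_num)
  have hf'c : Continuous (fderiv ℝ f) := hf.continuous_fderiv (by norm_num)
  have hhc : Continuous h := hh.continuous
  have hh'c : Continuous (fderiv ℝ h) := hh.continuous_fderiv (by norm_num)
  let F : ℝ → E → ℝ := fun t x => h (t, fderiv ℝ V x) * f (x + t • V x)
  let F' : ℝ → E → ℝ := fun t x => fderiv ℝ h (t, fderiv ℝ V x) (1, 0) * f (x + t • V x)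
    + h (t, fderiv ℝ V x) * fderiv ℝ f (x + t • V x) (V x)
  have hdet : ∀ t x, HasDerivAt (fun t => h (t, fderiv ℝ V x))
      (fderiv ℝ h (t, fderiv ℝ V x) (1, 0)) t := by
    intro t x
    have h1 : HasDerivAt (fun s : ℝ => (s, fderiv ℝ V x)) ((1 : ℝ), (0 : E →L[ℝ] E)) t :=
      (hasDerivAt_id t).prodMk (hasDerivAt_const t _)
    have h2 : HasFDerivAt h (fderiv ℝ h (t, fderiv ℝ V x)) (t, fderiv ℝ V x) :=
      (hh.differentiable (by norm_num) (t, fderiv ℝ V x)).hasFDerivAt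
    exact HasFDerivAt.comp_hasDerivAt (f := fun s : ℝ => (s, fderiv ℝ V x)) t h2 h1
  have hFF' : ∀ t x, HasDerivAt (F · x) (F' t x) t := by
    intro t x
    refine (hdet t x).mul ?_
    have h1 : HasDerivAt (fun t : ℝ => x + t • V x) (V x) t := by
      simpa using ((hasDerivAt_id t).smul_const (V x)).const_add x
    exact (hfd (x + t • V x)).comp_hasDerivAt t h1
  have hFc : Continuous (fun p : ℝ × E => F p.1 p.2) := by
    have h1 : Continuous (fun p : ℝ × E => h (p.1, fderiv ℝ V p.2)) := by fun_prop
    have h2 : Continuous (fun p : ℝ × E => f (p.2 + p.1 • V p.2)) := by fun_prop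
    exact h1.mul h2
  have hF'c : Continuous (fun p : ℝ × E => F' p.1 p.2) := by
    have h1 : Continuous (fun p : ℝ × E => h (p.1, fderiv ℝ V p.2)) := by fun_prop
    have h2 : Continuous (fun p : ℝ × E => f (p.2 + p.1 • V p.2)) := by fun_prop
    have h3 : Continuous (fun p : ℝ × E => fderiv ℝ h (p.1, fderiv ℝ V p.2) (1, 0)) :=
      (hh'c.comp (by fun_prop : Continuous
        (fun p : ℝ × E => (p.1, fderiv ℝ V p.2)))).clm_apply continuous_const
    have h4 : Continuous (fun p : ℝ × E => fderiv ℝ f (p.2 + p.1 • V p.2) (V p.2)) :=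
      (hf'c.comp (by fun_prop : Continuous
        (fun p : ℝ × E => p.2 + p.1 • V p.2))).clm_apply (by fun_prop)
    exact (h3.mul h2).add (h1.mul h4)
  have hcl : IsCompact (closure Ω) := hΩb.isCompact_closure
  have hfin : volume Ω < ⊤ := hΩb.measure_lt_top
  obtain ⟨C, hC⟩ := ((isCompact_Icc (a := (-1:ℝ)) (b := 1)).prod hcl).exists_bound_of_continuousOn
    hF'c.continuousOn
  have key := (hasDerivAt_integral_of_dominated_loc_of_deriv_le (μ := volume.restrict Ω)
    (F := F) (F' := F') (x₀ := 0) (s := Set.Icc (-1) 1) (bound := fun _ => C)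
    (Icc_mem_nhds (by norm_num) (by norm_num))
    (Eventually.of_forall fun t =>
      (hFc.comp (Continuous.prodMk_right t)).aestronglyMeasurable)
    (((hFc.comp (Continuous.prodMk_right 0)).continuousOn.integrableOn_compact hcl).mono_set
      subset_closure)
    (hF'c.comp (Continuous.prodMk_right 0)).aestronglyMeasurable
    ((ae_restrict_iff' hΩm).2 (Eventually.of_forall fun x hx t ht =>
      hC (t, x) ⟨ht, subset_closure hx⟩))
    (integrableOn_const hfin.ne)
    (Eventually.of_forall fun x t _ => hFF' t x)).2
  have hF'0 : ∀ x, F' 0 x = ⟪V x, gradient f x⟫ +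
          f x * LinearMap.trace ℝ (EuclideanSpace ℝ (Fin d)) (fderiv ℝ V x).toLinearMap := by
    intro x
    have e1 : fderiv ℝ h (0, fderiv ℝ V x) (1, 0) = _ :=
      (hdet 0 x).unique (aux_deriv_det d (fderiv ℝ V x))
    have e2 : h (0, fderiv ℝ V x) = 1 := by simp [h, ContinuousLinearMap.det]
    have e3 : ⟪V x, gradient f x⟫ = fderiv ℝ f x (V x) := by
      rw [real_inner_comm, gradient, InnerProductSpace.toDual_symm_apply]
    simp only [F', e1, e2, e3, zero_smul, add_zero]
    ring
  simp only [hF'0] at key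
  refine key.congr_of_eventuallyEq ?_
  -- small `t`
  have hpos : ∀ᶠ B in 𝓝 (ContinuousLinearMap.id ℝ E), 0 < B.det := by
    refine ContinuousLinearMap.continuous_det.continuousAt.eventually (lt_mem_nhds ?_)
    simp [ContinuousLinearMap.det]
  obtain ⟨δ, hδ, hB⟩ := Metric.eventually_nhds_iff.1 hpos
  have hCV : 0 ≤ CV := (norm_nonneg _).trans (hVb 0)
  have hsmall : ∀ ε : ℝ, 0 < ε → ∀ᶠ t : ℝ in 𝓝 0, |t| * CV < ε := by
    intro ε hε
    have : ContinuousAt (fun t : ℝ => |t| * CV) 0 := by fun_prop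
    exact this.eventually (gt_mem_nhds (by simpa using hε))
  filter_upwards [hsmall δ hδ, hsmall 1 one_pos] with t ht1 ht2
  have hLip : ∀ x y, ‖V x - V y‖ ≤ CV * ‖x - y‖ := fun x y =>
    Convex.norm_image_sub_le_of_norm_fderiv_le (𝕜 := ℝ) (s := Set.univ)
      (fun z _ => (hVd z).differentiableAt) (fun z _ => hVb z) convex_univ
      (Set.mem_univ _) (Set.mem_univ _)
  have hinj : Set.InjOn (fun x => x + t • V x) Ω := by
    intro x _ y _ hxy
    have h1 : x - y = t • (V y - V x) := by
      rw [smul_sub, sub_eq_sub_iff_add_eq_add, add_comm (t • V y)]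
      exact hxy
    have h2 : ‖x - y‖ ≤ |t| * CV * ‖x - y‖ := by
      calc ‖x - y‖ = |t| * ‖V y - V x‖ := by rw [h1, norm_smul, Real.norm_eq_abs]
        _ ≤ |t| * (CV * ‖y - x‖) := by gcongr; exact hLip y x
        _ = _ := by rw [norm_sub_rev y x]; ring
    have h3 : ‖x - y‖ = 0 := by nlinarith [norm_nonneg (x - y)]
    exact sub_eq_zero.1 (norm_eq_zero.1 h3)
  rw [integral_image_eq_integral_abs_det_fderiv_smul volume hΩm (f := fun x => x + t • V x)
    (f' := fun x => ContinuousLinearMap.id ℝ E + t • fderiv ℝ V x)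
    (fun x _ => ((hasFDerivAt_id x).add ((hVd x).const_smul t)).hasFDerivWithinAt) hinj]
  refine integral_congr_ae (Eventually.of_forall fun x => ?_)
  have hp : 0 < (ContinuousLinearMap.id ℝ E + t • fderiv ℝ V x).det := by
    apply hB
    rw [dist_eq_norm, add_sub_cancel_left, norm_smul, Real.norm_eq_abs]
    exact (mul_le_mul_of_nonneg_left (hVb x) (abs_nonneg t)).trans_lt ht1
  simp only [F, h, abs_of_pos hp, smul_eq_mul]
end

section
/- Let L > 0 and let γ : ℝ → ℝ³ be twice continuously differentiable, L-periodic, injective on [0,L), with γ′(s) ≠ 0 for all s, and set Γ = γ([0,L)). Let Ω ⊆ ℝ³ be an open set containing Γ and let f : ℝ³ → ℝ be continuous and integrable on Ω. For r > 0 let Γ_r = { x ∈ ℝ³ : dist(x,Γ) ≤ r }. Then, as r → 0⁺, ( ∫_{Ω \ Γ_r} f dx − ∫_Ω f dx ) / (π r²) converges to −∫₀ᴸ f(γ(s)) ‖γ′(s)‖ ds. -/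
open MeasureTheory Topology Filter

lemma exists_split (e : EuclideanSpace ℝ (Fin 3)) (he : ‖e‖ = 1) :
    ∃ (p : EuclideanSpace ℝ (Fin 3) →ₗ[ℝ] ℝ)
      (q : EuclideanSpace ℝ (Fin 3) →ₗ[ℝ] EuclideanSpace ℝ (Fin 2)),
      p e = 1 ∧ (∀ x, ‖x‖ ^ 2 = (p x) ^ 2 + ‖q x‖ ^ 2) ∧
      MeasurePreserving (fun x => (p x, q x)) volume volume := by
  obtain ⟨b, hb⟩ := Orthonormal.exists_orthonormalBasis_extension_of_card_eq (𝕜 := ℝ)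
    (E := EuclideanSpace ℝ (Fin 3)) (ι := Fin 3) (by simp) (v := fun _ => e) (s := {0})
    (by
      constructor
      · intro i; simpa using he
      · intro i j hij
        exact absurd (Subsingleton.elim i j) hij)
  have hb0 : b 0 = e := hb 0 (by simp)
  refine ⟨(LinearMap.proj 0).comp ((WithLp.linearEquiv 2 ℝ (Fin 3 → ℝ)).toLinearMap.comp
      b.repr.toLinearEquiv.toLinearMap),
    (WithLp.linearEquiv 2 ℝ (Fin 2 → ℝ)).symm.toLinearMap.comp
      ((LinearMap.funLeft ℝ ℝ Fin.succ).comp ((WithLp.linearEquiv 2 ℝ (Fin 3 → ℝ)).toLinearMap.comp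
      b.repr.toLinearEquiv.toLinearMap)), ?_, ?_, ?_⟩
  · rw [← hb0]; simp
  · intro x
    rw [← b.repr.norm_map x, EuclideanSpace.norm_sq_eq, EuclideanSpace.norm_sq_eq]
    simp [Fin.sum_univ_succ, LinearMap.funLeft]
  · have h1 := b.measurePreserving_repr
    have h2 := PiLp.volume_preserving_ofLp (Fin 3)
    have h3 := volume_preserving_piFinSuccAbove (fun _ : Fin 3 => ℝ) 0
    have h5 := PiLp.volume_preserving_toLp (Fin 2)
    have h6 := (MeasurePreserving.id (volume : Measure ℝ)).prod h5
    exact h6.comp (h3.comp (h2.comp h1))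

lemma vol_tube (A B ρ : ℝ) (hρ : 0 ≤ ρ) (φ : ℝ → EuclideanSpace ℝ (Fin 2)) (hφ : Continuous φ) :
    MeasurableSet {z : ℝ × EuclideanSpace ℝ (Fin 2) | z.1 ∈ Set.Icc A B ∧ ‖z.2 - φ z.1‖ ≤ ρ} ∧
    volume {z : ℝ × EuclideanSpace ℝ (Fin 2) | z.1 ∈ Set.Icc A B ∧ ‖z.2 - φ z.1‖ ≤ ρ} =
      ENNReal.ofReal (Real.pi * ρ ^ 2 * (B - A)) := by
  have hm : MeasurableSet
      {z : ℝ × EuclideanSpace ℝ (Fin 2) | z.1 ∈ Set.Icc A B ∧ ‖z.2 - φ z.1‖ ≤ ρ} := by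
    apply IsClosed.measurableSet
    apply IsClosed.inter
    · exact isClosed_Icc.preimage continuous_fst
    · have : Continuous (fun z : ℝ × EuclideanSpace ℝ (Fin 2) => ‖z.2 - φ z.1‖) := by fun_prop
      exact isClosed_le this continuous_const
  refine ⟨hm, ?_⟩
  rw [Measure.volume_eq_prod, Measure.prod_apply hm]
  have : ∀ t : ℝ, volume (Prod.mk t ⁻¹' {z : ℝ × EuclideanSpace ℝ (Fin 2) |
      z.1 ∈ Set.Icc A B ∧ ‖z.2 - φ z.1‖ ≤ ρ}) =
      (Set.Icc A B).indicator (fun _ => ENNReal.ofReal (Real.pi * ρ ^ 2)) t := by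
    intro t
    by_cases ht : t ∈ Set.Icc A B
    · rw [Set.indicator_of_mem ht]
      have : (Prod.mk t ⁻¹' {z : ℝ × EuclideanSpace ℝ (Fin 2) |
        z.1 ∈ Set.Icc A B ∧ ‖z.2 - φ z.1‖ ≤ ρ}) = Metric.closedBall (φ t) ρ := by
        ext y
        simp only [Set.mem_preimage, Set.mem_ofPred_eq, ht, true_and, mem_closedBall_iff_norm]
      rw [this, EuclideanSpace.volume_closedBall_fin_two, ENNReal.ofReal_mul Real.pi_pos.le, 
        ENNReal.ofReal_pow hρ, mul_comm]
    · rw [Set.indicator_of_notMem ht]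
      have : (Prod.mk t ⁻¹' {z : ℝ × EuclideanSpace ℝ (Fin 2) |
        z.1 ∈ Set.Icc A B ∧ ‖z.2 - φ z.1‖ ≤ ρ}) = ∅ := by
        ext y
        simp only [Set.mem_preimage, Set.mem_ofPred_eq, ht, false_and, Set.mem_empty_iff_false]
      rw [this, measure_empty]
  simp_rw [this]
  rw [lintegral_indicator measurableSet_Icc, setLIntegral_const, Real.volume_Icc,
    ← ENNReal.ofReal_mul (by positivity)]

/-- geometric core -/
lemma arc_bounds (γ : ℝ → EuclideanSpace ℝ (Fin 3)) (hc : Continuous γ) (a b : ℝ) (hab : a ≤ b)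
    (v : EuclideanSpace ℝ (Fin 3)) (hv : v ≠ 0) (ε : ℝ) (hε : 0 < ε) (hε2 : ε ≤ 1 / 2)
    (H : ∀ s ∈ Set.Icc a b, ∀ s' ∈ Set.Icc a b, s ≤ s' →
      ‖γ s' - γ s - (s' - s) • v‖ ≤ ε * ‖v‖ * (s' - s)) (r : ℝ) (hr : 0 < r) :
    Real.pi * r ^ 2 * ((1 - ε) * ‖v‖ * (b - a)) ≤
      volume.real (Metric.cthickening r (γ '' Set.Icc a b)) ∧
    volume.real (Metric.cthickening r (γ '' Set.Icc a b)) ≤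
      Real.pi * r ^ 2 * ((1 + 2 * ε) ^ 2 * ((1 + ε) * ‖v‖ * (b - a) + 2 * r)) := by
  have hm : 0 < ‖v‖ := norm_pos_iff.2 hv
  obtain ⟨p, q, hpe, hpq, hmp⟩ := exists_split (‖v‖⁻¹ • v) (by
    rw [norm_smul, norm_inv, norm_norm, inv_mul_cancel₀ hm.ne'])
  have hpv : p v = ‖v‖ := by
    rw [map_smul, smul_eq_mul, inv_mul_eq_one₀ hm.ne'] at hpe
    exact hpe.symm
  have hqv : q v = 0 := by
    have := hpq v
    rw [hpv] at this
    have h2 : ‖q v‖ ^ 2 = 0 := by linarith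
    simpa using h2
  have hple : ∀ x, |p x| ≤ ‖x‖ := fun x => by
    apply abs_le_of_sq_le_sq _ (norm_nonneg x)
    rw [hpq x]; nlinarith [sq_nonneg ‖q x‖]
  have hqle : ∀ x, ‖q x‖ ≤ ‖x‖ := fun x => by
    apply le_of_sq_le_sq _ (norm_nonneg x)
    rw [hpq x]; nlinarith [sq_nonneg (p x)]
  have hpc : Continuous p := p.continuous_of_finiteDimensional
  have hqc : Continuous q := q.continuous_of_finiteDimensional
  set T : ℝ → ℝ := fun s => p (γ s) with hT
  have hTc : Continuous T := hpc.comp hc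
  have hT1 : ∀ s ∈ Set.Icc a b, ∀ s' ∈ Set.Icc a b, s ≤ s' →
      (1 - ε) * ‖v‖ * (s' - s) ≤ T s' - T s ∧ T s' - T s ≤ (1 + ε) * ‖v‖ * (s' - s) := by
    intro s hs s' hs' hss
    have h1 := (hple _).trans (H s hs s' hs' hss)
    rw [map_sub, map_sub, map_smul, hpv, smul_eq_mul, abs_le] at h1
    constructor <;> simp only [hT] <;> nlinarith [h1.1, h1.2]
  have hq1 : ∀ s ∈ Set.Icc a b, ∀ s' ∈ Set.Icc a b, s ≤ s' →
      ‖q (γ s') - q (γ s)‖ ≤ 2 * ε * (T s' - T s) := by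
    intro s hs s' hs' hss
    have h1 := (hqle _).trans (H s hs s' hs' hss)
    rw [map_sub, map_sub, map_smul, hqv, smul_zero, sub_zero] at h1
    have h2 := (hT1 s hs s' hs' hss).1
    have h3 : 0 ≤ ‖v‖ * (s' - s) := mul_nonneg hm.le (by linarith)
    nlinarith [mul_nonneg hε.le h3]
  have hTab : T a ≤ T b := by
    have := (hT1 a ⟨le_rfl, hab⟩ b ⟨hab, le_rfl⟩ hab).1
    have h3 : 0 ≤ (1 - ε) * ‖v‖ * (b - a) := mul_nonneg (mul_nonneg (by linarith) hm.le) (by linarith)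
    linarith
  have hq2 : ∀ s ∈ Set.Icc a b, ∀ s' ∈ Set.Icc a b,
      ‖q (γ s') - q (γ s)‖ ≤ 2 * ε * |T s' - T s| := by
    intro s hs s' hs'
    rcases le_total s s' with h | h
    · exact (hq1 s hs s' hs' h).trans (by gcongr; exact le_abs_self _)
    · rw [norm_sub_rev, abs_sub_comm]
      exact (hq1 s' hs' s hs h).trans (by gcongr; exact le_abs_self _)
  have hIVT : ∀ t : Set.Icc (T a) (T b), ∃ s ∈ Set.Icc a b, T s = t := fun t =>
    intermediate_value_Icc hab hTc.continuousOn t.2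
  choose σ hσ hTσ using hIVT
  set φ : ℝ → EuclideanSpace ℝ (Fin 2) := fun t => q (γ (σ (Set.projIcc (T a) (T b) hTab t))) with hφ
  have hφL : ∀ t t', ‖φ t - φ t'‖ ≤ 2 * ε * |t - t'| := by
    intro t t'
    refine (hq2 _ (hσ _) _ (hσ _)).trans ?_
    rw [hTσ, hTσ]
    exact mul_le_mul_of_nonneg_left (Set.abs_projIcc_sub_projIcc hTab) (by positivity)
  have hφc : Continuous φ := by
    apply LipschitzWith.continuous (K := (⟨2 * ε, by positivity⟩ : NNReal))
    apply LipschitzWith.of_dist_le_mul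
    intro t t'
    rw [dist_eq_norm, Real.dist_eq]
    exact hφL t t'
  have hφT : ∀ s ∈ Set.Icc a b, φ (T s) = q (γ s) := by
    intro s hs
    have hTs : T s ∈ Set.Icc (T a) (T b) := by
      have h1 := (hT1 a ⟨le_rfl, hab⟩ s hs hs.1).1
      have h2 := (hT1 s hs b ⟨hab, le_rfl⟩ hs.2).1
      have h3 : 0 ≤ (1 - ε) * ‖v‖ * (s - a) := mul_nonneg (mul_nonneg (by linarith) hm.le) (by linarith [hs.1])
      have h4 : 0 ≤ (1 - ε) * ‖v‖ * (b - s) := mul_nonneg (mul_nonneg (by linarith) hm.le) (by linarith [hs.2])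
      exact ⟨by linarith, by linarith⟩
    have := hq2 s hs _ (hσ (Set.projIcc (T a) (T b) hTab (T s)))
    rw [hTσ, Set.projIcc_of_mem hTab hTs, sub_self, abs_zero, mul_zero] at this
    rw [hφ]
    simp only
    rw [Set.projIcc_of_mem hTab hTs]
    exact sub_eq_zero.1 (norm_le_zero_iff.1 this)
  have hK : IsCompact (γ '' Set.Icc a b) := isCompact_Icc.image hc
  have hfin : volume (Metric.cthickening r (γ '' Set.Icc a b)) ≠ ⊤ :=
    hK.cthickening.measure_lt_top.ne
  constructor
  · obtain ⟨hm1, hv1⟩ := vol_tube (T a) (T b) r hr.le φ hφc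
    have hsub : (fun x => (p x, q x)) ⁻¹' {z : ℝ × EuclideanSpace ℝ (Fin 2) |
        z.1 ∈ Set.Icc (T a) (T b) ∧ ‖z.2 - φ z.1‖ ≤ r} ⊆
        Metric.cthickening r (γ '' Set.Icc a b) := by
      rintro x ⟨hx1, hx2⟩
      simp only at hx1 hx2
      set s := σ (Set.projIcc (T a) (T b) hTab (p x)) with hs
      have hps : p (γ s) = p x := by
        have := hTσ (Set.projIcc (T a) (T b) hTab (p x))
        rw [Set.projIcc_of_mem hTab hx1] at this
        simpa [hs, hT, Set.projIcc_of_mem hTab hx1] using this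
      apply Metric.mem_cthickening_of_dist_le x (γ s) r _ (Set.mem_image_of_mem _ (hσ _))
      rw [dist_eq_norm]
      apply le_of_sq_le_sq _ hr.le
      rw [hpq, map_sub, map_sub, hps, sub_self]
      have : ‖q x - q (γ s)‖ ≤ r := hx2
      have h0 := norm_nonneg (q x - q (γ s))
      nlinarith
    have h1 := measure_mono (μ := volume) hsub
    rw [hmp.measure_preimage hm1.nullMeasurableSet, hv1, ENNReal.ofReal_le_iff_le_toReal hfin] at h1
    refine le_trans ?_ h1
    gcongr
    exact (hT1 a ⟨le_rfl, hab⟩ b ⟨hab, le_rfl⟩ hab).1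
  · obtain ⟨hm1, hv1⟩ := vol_tube (T a - r) (T b + r) ((1 + 2 * ε) * r) (by positivity) φ hφc
    have hsub : Metric.cthickening r (γ '' Set.Icc a b) ⊆ (fun x => (p x, q x)) ⁻¹'
        {z : ℝ × EuclideanSpace ℝ (Fin 2) |
        z.1 ∈ Set.Icc (T a - r) (T b + r) ∧ ‖z.2 - φ z.1‖ ≤ (1 + 2 * ε) * r} := by
      intro x hx
      rw [hK.cthickening_eq_biUnion_closedBall hr.le] at hx
      simp only [Set.mem_iUnion, Metric.mem_closedBall, Set.mem_image, exists_prop] at hx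
      obtain ⟨_, ⟨s, hs, rfl⟩, hxs⟩ := hx
      rw [dist_eq_norm] at hxs
      have hp := (hple _).trans hxs
      have hq := (hqle _).trans hxs
      rw [map_sub] at hp hq
      have h1 := (hT1 a ⟨le_rfl, hab⟩ s hs hs.1).1
      have h2 := (hT1 s hs b ⟨hab, le_rfl⟩ hs.2).1
      have h3 : 0 ≤ (1 - ε) * ‖v‖ * (s - a) := mul_nonneg (mul_nonneg (by linarith) hm.le) (by linarith [hs.1])
      have h4 : 0 ≤ (1 - ε) * ‖v‖ * (b - s) := mul_nonneg (mul_nonneg (by linarith) hm.le) (by linarith [hs.2])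
      have hp' := abs_le.1 hp
      have hTs : T s = p (γ s) := rfl
      refine ⟨⟨?_, ?_⟩, ?_⟩
      · simp only; linarith [hp'.1]
      · simp only; linarith [hp'.2]
      · simp only
        have h5 := hφL (T s) (p x)
        rw [hφT s hs] at h5
        have h6 : q x - φ (p x) = (q x - q (γ s)) + (q (γ s) - φ (p x)) := by abel
        rw [h6]
        refine (norm_add_le _ _).trans ?_
        have h7 : 2 * ε * |T s - p x| ≤ 2 * ε * r := by
          rw [abs_sub_comm]; gcongr
        linarith
    have h1 := measure_mono (μ := volume) hsub
    rw [hmp.measure_preimage hm1.nullMeasurableSet, hv1] at h1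
    have h2 := ENNReal.toReal_mono ENNReal.ofReal_ne_top h1
    rw [ENNReal.toReal_ofReal (mul_nonneg (by positivity) (by linarith))] at h2
    refine h2.trans ?_
    have h3 := (hT1 a ⟨le_rfl, hab⟩ b ⟨hab, le_rfl⟩ hab).2
    have : Real.pi * ((1 + 2 * ε) * r) ^ 2 * (T b + r - (T a - r)) =
      Real.pi * r ^ 2 * ((1 + 2 * ε) ^ 2 * (T b - T a + 2 * r)) := by ring
    rw [this]
    gcongr

lemma curve_H (γ : ℝ → EuclideanSpace ℝ (Fin 3)) (hγ : Differentiable ℝ γ) (a b : ℝ)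
    (v : EuclideanSpace ℝ (Fin 3)) (C : ℝ)
    (h : ∀ s ∈ Set.Icc a b, ‖deriv γ s - v‖ ≤ C) :
    ∀ s ∈ Set.Icc a b, ∀ s' ∈ Set.Icc a b, s ≤ s' →
      ‖γ s' - γ s - (s' - s) • v‖ ≤ C * (s' - s) := by
  intro s hs s' hs' hss
  have hd : ∀ x ∈ Set.Icc a b,
      HasDerivWithinAt (fun t => γ t - t • v) (deriv γ x - (1 : ℝ) • v) (Set.Icc a b) x := by
    intro x hx
    exact ((hγ x).hasDerivAt.sub ((hasDerivAt_id x).smul_const v)).hasDerivWithinAt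
  have := (convex_Icc a b).norm_image_sub_le_of_norm_hasDerivWithin_le (C := C) hd
    (by intro x hx; rw [one_smul]; exact h x hx) hs hs'
  rw [Real.norm_of_nonneg (by linarith)] at this
  have e : γ s' - γ s - (s' - s) • v = γ s' - s' • v - (γ s - s • v) := by
    rw [sub_smul]; abel
  rw [e]; exact this

lemma unif_cont {E : Type*} [NormedAddCommGroup E] (k : ℝ → E) (hk : Continuous k) (L ε : ℝ)
    (hε : 0 < ε) : ∃ δ > 0, ∀ a ∈ Set.Icc 0 L, ∀ s ∈ Set.Icc 0 L, |s - a| ≤ δ →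
      ‖k s - k a‖ ≤ ε := by
  have := isCompact_Icc (a := (0 : ℝ)) (b := L) |>.uniformContinuousOn_of_continuous hk.continuousOn
  rw [Metric.uniformContinuousOn_iff] at this
  obtain ⟨δ, hδ, h⟩ := this ε hε
  refine ⟨δ / 2, by positivity, fun a ha s hs hsa => ?_⟩
  rw [← dist_eq_norm]
  refine (h s hs a ha ?_).le
  rw [Real.dist_eq]; linarith

lemma speed_bounds (γ : ℝ → EuclideanSpace ℝ (Fin 3)) (hc : Continuous (deriv γ))
    (hγ' : ∀ s, deriv γ s ≠ 0) (L : ℝ) (hL : 0 < L) :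
    ∃ m > 0, ∃ S > 0, ∀ s ∈ Set.Icc 0 L, m ≤ ‖deriv γ s‖ ∧ ‖deriv γ s‖ ≤ S := by
  have hne : (Set.Icc 0 L).Nonempty := ⟨0, le_rfl, hL.le⟩
  obtain ⟨x, hx, hx'⟩ := isCompact_Icc.exists_isMinOn hne hc.norm.continuousOn
  obtain ⟨y, hy, hy'⟩ := isCompact_Icc.exists_isMaxOn hne hc.norm.continuousOn
  exact ⟨_, norm_pos_iff.2 (hγ' x), _, norm_pos_iff.2 (hγ' y), fun s hs => ⟨hx' hs, hy' hs⟩⟩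

/-- local bounds on the volume -/
lemma vol_local (γ : ℝ → EuclideanSpace ℝ (Fin 3)) (hd : Differentiable ℝ γ)
    (hc : Continuous (deriv γ)) (hγ' : ∀ s, deriv γ s ≠ 0) (L : ℝ) (hL : 0 < L)
    (ε : ℝ) (hε : 0 < ε) (hε2 : ε ≤ 1 / 2) :
    ∃ δ > 0, ∀ a b, 0 ≤ a → a ≤ b → b ≤ L → b - a ≤ δ → 
      (∀ s ∈ Set.Icc a b, ‖deriv γ s - deriv γ a‖ ≤ ε * ‖deriv γ a‖) ∧ ∀ r > 0,
      Real.pi * r ^ 2 * ((1 - ε) * ‖deriv γ a‖ * (b - a)) ≤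
      volume.real (Metric.cthickening r (γ '' Set.Icc a b)) ∧
    volume.real (Metric.cthickening r (γ '' Set.Icc a b)) ≤
      Real.pi * r ^ 2 * ((1 + 2 * ε) ^ 2 * ((1 + ε) * ‖deriv γ a‖ * (b - a) + 2 * r)) := by
  obtain ⟨m, hm, S, hS, hmS⟩ := speed_bounds γ hc hγ' L hL
  obtain ⟨δ, hδ, h⟩ := unif_cont (deriv γ) hc L (ε * m) (by positivity)
  refine ⟨δ, hδ, fun a b ha hab hb hba => ?_⟩
  have haI : a ∈ Set.Icc 0 L := ⟨ha, by linarith⟩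
  have h1 : ∀ s ∈ Set.Icc a b, ‖deriv γ s - deriv γ a‖ ≤ ε * ‖deriv γ a‖ := by
    intro s hs
    refine (h a haI s ⟨by linarith [hs.1], by linarith [hs.2]⟩ ?_).trans ?_
    · rw [abs_of_nonneg (by linarith [hs.1])]; linarith [hs.2]
    · gcongr; exact (hmS a haI).1
  exact ⟨h1, fun r hr => arc_bounds γ hd.continuous a b hab _ (hγ' a) ε hε hε2
    (curve_H γ hd a b _ _ h1) r hr⟩

lemma int_le (h : ℝ → ℝ) (hc : Continuous h) (a b C : ℝ) (hab : a ≤ b)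
    (hC : ∀ s ∈ Set.Icc a b, h s ≤ C) : ∫ s in a..b, h s ≤ C * (b - a) := by
  have := intervalIntegral.integral_mono_on hab (hc.intervalIntegrable a b)
    (continuous_const.intervalIntegrable (μ := volume) a b) (g := fun _ => C) hC
  rw [intervalIntegral.integral_const, smul_eq_mul] at this
  linarith

lemma le_int (h : ℝ → ℝ) (hc : Continuous h) (a b C : ℝ) (hab : a ≤ b)
    (hC : ∀ s ∈ Set.Icc a b, C ≤ h s) : C * (b - a) ≤ ∫ s in a..b, h s := by
  have := intervalIntegral.integral_mono_on hab 
    (continuous_const.intervalIntegrable (μ := volume) a b) 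
    (hc.intervalIntegrable a b) (f := fun _ => C) hC
  rw [intervalIntegral.integral_const, smul_eq_mul] at this
  linarith

lemma lower_local (γ : ℝ → EuclideanSpace ℝ (Fin 3)) (hd : Differentiable ℝ γ)
    (hc : Continuous (deriv γ)) (hγ' : ∀ s, deriv γ s ≠ 0) (L : ℝ) (hL : 0 < L)
    (η : ℝ) (hη : 0 < η) :
    ∃ δ > 0, ∀ a b, 0 ≤ a → a ≤ b → b ≤ L → b - a ≤ δ → ∀ r > 0,
      Real.pi * r ^ 2 * ((∫ s in a..b, ‖deriv γ s‖) - η * (b - a)) ≤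
      volume.real (Metric.cthickening r (γ '' Set.Icc a b)) := by
  obtain ⟨m, hm, S, hS, hmS⟩ := speed_bounds γ hc hγ' L hL
  obtain ⟨δ, hδ, h⟩ := vol_local γ hd hc hγ' L hL (min (1/2) (η / (2 * S))) (by positivity)
    (min_le_left _ _)
  set ε := min (1/2) (η / (2 * S)) with hεd
  have hε : 0 < ε := by positivity
  have hεS : 2 * (ε * S) ≤ η := by
    have : ε ≤ η / (2 * S) := min_le_right _ _
    rw [le_div_iff₀ (by positivity)] at this
    linarith
  refine ⟨δ, hδ, fun a b ha hab hb hba r hr => ?_⟩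
  obtain ⟨h1, h2⟩ := h a b ha hab hb hba
  refine le_trans ?_ (h2 r hr).1
  have haS := (hmS a ⟨ha, by linarith⟩).2
  have h3 : ∫ s in a..b, ‖deriv γ s‖ ≤ ((1 + ε) * ‖deriv γ a‖) * (b - a) := by
    apply int_le _ hc.norm _ _ _ hab
    intro s hs
    have := norm_le_norm_add_norm_sub' (deriv γ s) (deriv γ a)
    linarith [h1 s hs]
  have h4 : 2 * (ε * ‖deriv γ a‖) ≤ η := le_trans (by gcongr) hεS
  have h5 := mul_le_mul_of_nonneg_right h4 (sub_nonneg.2 hab)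
  gcongr
  nlinarith

lemma lower_global (γ : ℝ → EuclideanSpace ℝ (Fin 3)) (hd : Differentiable ℝ γ)
    (hc : Continuous (deriv γ)) (hγ' : ∀ s, deriv γ s ≠ 0) (L : ℝ) (hL : 0 < L)
    (hinj : Set.InjOn γ (Set.Ico 0 L)) (η : ℝ) (hη : 0 < η) :
    ∃ δ > 0, ∀ k : ℕ, ∀ a b, 0 ≤ a → a ≤ b → b < L → b ≤ a + (k + 1) * δ → ∀ κ > 0,
      ∀ᶠ r in 𝓝[>] (0:ℝ),
      Real.pi * r ^ 2 * ((∫ s in a..b, ‖deriv γ s‖) - η * (b - a) - κ) ≤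
      volume.real (Metric.cthickening r (γ '' Set.Icc a b)) := by
  obtain ⟨m, hm, S, hS, hmS⟩ := speed_bounds γ hc hγ' L hL
  obtain ⟨δ, hδ, h⟩ := lower_local γ hd hc hγ' L hL η hη
  refine ⟨δ, hδ, fun k => ?_⟩
  have hloc : ∀ a b, 0 ≤ a → a ≤ b → b < L → b - a ≤ δ → ∀ κ > 0,
      ∀ᶠ r in 𝓝[>] (0:ℝ),
      Real.pi * r ^ 2 * ((∫ s in a..b, ‖deriv γ s‖) - η * (b - a) - κ) ≤
      volume.real (Metric.cthickening r (γ '' Set.Icc a b)) := by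
    intro a b ha hab hb hba κ hκ
    filter_upwards [self_mem_nhdsWithin] with r hr
    refine le_trans ?_ (h a b ha hab hb.le (by linarith) r hr)
    apply mul_le_mul_of_nonneg_left _ (by positivity)
    linarith
  induction k with
  | zero =>
    intro a b ha hab hb hba κ hκ
    exact hloc a b ha hab hb (by push_cast at hba; linarith) κ hκ
  | succ k ih =>
    intro a b ha hab hb hba κ hκ
    push_cast at hba
    rcases le_total b (a + (k + 1) * δ) with hle | hle
    · exact ih a b ha hab hb hle κ hκ
    set c := a + (k + 1) * δ with hcd
    have hac : a + δ ≤ c := by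
      have : 0 ≤ (k : ℝ) * δ := by positivity
      rw [hcd]; linarith
    set τ := min (δ / 2) (κ / (2 * S)) with hτd
    have hτ : 0 < τ := by positivity
    have hτ1 : τ ≤ δ / 2 := min_le_left _ _
    have hτ2 : S * τ ≤ κ / 2 := by
      have : τ ≤ κ / (2 * S) := min_le_right _ _
      rw [le_div_iff₀ (by positivity)] at this
      linarith
    have i1 := ih a (c - τ) ha (by linarith) (by linarith) (by linarith) (κ / 4) (by positivity)
    have i2 := hloc c b (by linarith) hle hb (by rw [hcd]; linarith) (κ / 4) (by positivity)
    have hK1 : IsCompact (γ '' Set.Icc a (c - τ)) := isCompact_Icc.image hd.continuous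
    have hK2 : IsCompact (γ '' Set.Icc c b) := isCompact_Icc.image hd.continuous
    have hdis : Disjoint (γ '' Set.Icc a (c - τ)) (γ '' Set.Icc c b) := by
      rw [Set.disjoint_left]
      rintro _ ⟨s, hs, rfl⟩ ⟨s', hs', he⟩
      have := hinj ⟨by linarith [hs'.1], by linarith [hs'.2]⟩
        ⟨by linarith [hs.1], by linarith [hs.2]⟩ he
      linarith [hs'.1, hs.2]
    obtain ⟨ρ, hρ, hdisρ⟩ := hdis.exists_cthickenings hK1 hK2.isClosed
    filter_upwards [i1, i2, self_mem_nhdsWithin, Ioo_mem_nhdsGT hρ] with r h1 h2 hr hrρ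
    have hdr : Disjoint (Metric.cthickening r (γ '' Set.Icc a (c - τ)))
        (Metric.cthickening r (γ '' Set.Icc c b)) :=
      hdisρ.mono (Metric.cthickening_mono hrρ.2.le _) (Metric.cthickening_mono hrρ.2.le _)
    have hsub : Metric.cthickening r (γ '' Set.Icc a (c - τ)) ∪
        Metric.cthickening r (γ '' Set.Icc c b) ⊆ Metric.cthickening r (γ '' Set.Icc a b) := by
      apply Set.union_subset <;> apply Metric.cthickening_subset_of_subset <;>
        apply Set.image_mono <;> apply Set.Icc_subset_Icc <;> linarith
    have hle2 : volume.real (Metric.cthickening r (γ '' Set.Icc a (c - τ))) +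
        volume.real (Metric.cthickening r (γ '' Set.Icc c b)) ≤
        volume.real (Metric.cthickening r (γ '' Set.Icc a b)) := by
      rw [← measureReal_union hdr Metric.isClosed_cthickening.measurableSet
        hK1.cthickening.measure_lt_top.ne hK2.cthickening.measure_lt_top.ne]
      exact measureReal_mono hsub
        (isCompact_Icc.image hd.continuous).cthickening.measure_lt_top.ne
    refine le_trans ?_ ((add_le_add h1 h2).trans hle2)
    rw [← mul_add]
    have hi : ∀ x y, IntervalIntegrable (fun s => ‖deriv γ s‖) volume x y :=
      fun x y => hc.norm.intervalIntegrable x y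
    have e1 := intervalIntegral.integral_add_adjacent_intervals (hi a (c - τ)) (hi (c - τ) c)
    have e2 := intervalIntegral.integral_add_adjacent_intervals (hi a c) (hi c b)
    have e3 : ∫ s in (c - τ)..c, ‖deriv γ s‖ ≤ S * (c - (c - τ)) := by
      apply int_le _ hc.norm _ _ _ (by linarith)
      intro s hs
      exact (hmS s ⟨by linarith [hs.1], by linarith [hs.2]⟩).2
    have e4 : 0 ≤ η * τ := by positivity
    apply mul_le_mul_of_nonneg_left _ (by positivity)
    nlinarith

lemma lower_total (γ : ℝ → EuclideanSpace ℝ (Fin 3)) (hd : Differentiable ℝ γ)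
    (hc : Continuous (deriv γ)) (hγ' : ∀ s, deriv γ s ≠ 0) (L : ℝ) (hL : 0 < L)
    (hinj : Set.InjOn γ (Set.Ico 0 L)) (η : ℝ) (hη : 0 < η) :
      ∀ᶠ r in 𝓝[>] (0:ℝ),
      Real.pi * r ^ 2 * ((∫ s in (0:ℝ)..L, ‖deriv γ s‖) - η) ≤
      volume.real (Metric.cthickening r (γ '' Set.Icc 0 L)) := by
  obtain ⟨m, hm, S, hS, hmS⟩ := speed_bounds γ hc hγ' L hL
  obtain ⟨δ, hδ, h⟩ := lower_global γ hd hc hγ' L hL hinj (η / (3 * L)) (by positivity)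
  set τ := min (L / 2) (η / (3 * S)) with hτd
  have hτ : 0 < τ := by positivity
  have hτ1 : τ ≤ L / 2 := min_le_left _ _
  have hτ2 : S * τ ≤ η / 3 := by
    have : τ ≤ η / (3 * S) := min_le_right _ _
    rw [le_div_iff₀ (by positivity)] at this
    linarith
  obtain ⟨k, hk⟩ := exists_nat_ge (L / δ)
  rw [div_le_iff₀ hδ] at hk
  have := h k 0 (L - τ) le_rfl (by linarith) (by linarith) (by linarith) (η / 3) (by positivity)
  filter_upwards [this, self_mem_nhdsWithin] with r h1 hr
  have hle2 : volume.real (Metric.cthickening r (γ '' Set.Icc 0 (L - τ))) ≤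
      volume.real (Metric.cthickening r (γ '' Set.Icc 0 L)) :=
    measureReal_mono (Metric.cthickening_subset_of_subset _ (Set.image_mono
      (Set.Icc_subset_Icc le_rfl (by linarith))))
        (isCompact_Icc.image hd.continuous).cthickening.measure_lt_top.ne
  refine le_trans ?_ (h1.trans hle2)
  have hi : ∀ x y, IntervalIntegrable (fun s => ‖deriv γ s‖) volume x y :=
      fun x y => hc.norm.intervalIntegrable x y
  have e1 := intervalIntegral.integral_add_adjacent_intervals (hi 0 (L - τ)) (hi (L - τ) L)
  have e3 : ∫ s in (L - τ)..L, ‖deriv γ s‖ ≤ S * (L - (L - τ)) := by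
    apply int_le _ hc.norm _ _ _ (by linarith)
    intro s hs
    exact (hmS s ⟨by linarith [hs.1], by linarith [hs.2]⟩).2
  have e4 : η / (3 * L) * (L - τ - 0) ≤ η / 3 := by
    have : η / (3 * L) * (L - τ - 0) ≤ η / (3 * L) * L := by gcongr; linarith
    refine this.trans (le_of_eq ?_)
    field_simp
  apply mul_le_mul_of_nonneg_left _ (by positivity)
  linarith

lemma upper_arith (ε η S M G w d r V I : ℝ) (hε : 0 < ε) (hε2 : ε ≤ 1 / 2) (hη : 0 < η)
    (hS : 0 < S) (hM : 0 < M) (hεS : ε * (S * (10 * M + 6)) ≤ η / 8) (hG0 : 0 ≤ G) (hGM : G ≤ M)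
    (hw0 : 0 ≤ w) (hwS : w ≤ S) (hd : 0 < d) (hr0 : 0 < r) (hr2 : r < η / 8 * d / (8 * (M + 1)))
    (hvol : V ≤ Real.pi * r ^ 2 * ((1 + 2 * ε) ^ 2 * ((1 + ε) * w * d + 2 * r)))
    (hint : (G * w - η / 2) * d ≤ I) :
    (G + ε) * V ≤ Real.pi * r ^ 2 * (I + η * d) := by
  have s2 := mul_le_mul_of_nonneg_left hvol (by positivity : 0 ≤ G + ε)
  refine s2.trans ?_
  have s3 : (G + ε) * (Real.pi * r ^ 2 * ((1 + 2 * ε) ^ 2 * ((1 + ε) * w * d + 2 * r))) =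
    Real.pi * r ^ 2 * ((G + ε) * (1 + 2 * ε) ^ 2 * (1 + ε) * w * d +
      (G + ε) * (1 + 2 * ε) ^ 2 * (2 * r)) := by ring
  rw [s3]
  have p1 : (1 + 2 * ε) ^ 2 * (1 + ε) ≤ 1 + 10 * ε := by
    nlinarith [mul_pos hε hε, mul_pos (mul_pos hε hε) hε,
      mul_nonneg hε.le (sub_nonneg.2 hε2), mul_nonneg (mul_pos hε hε).le (sub_nonneg.2 hε2)]
  have p2 : (1 + 2 * ε) ^ 2 ≤ 4 := by nlinarith
  have q1 : (G + ε) * (1 + 2 * ε) ^ 2 * (1 + ε) * w ≤ G * w + η / 8 := by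
    calc (G + ε) * (1 + 2 * ε) ^ 2 * (1 + ε) * w 
        = (G + ε) * w * ((1 + 2 * ε) ^ 2 * (1 + ε)) := by ring
      _ ≤ (G + ε) * w * (1 + 10 * ε) := by gcongr
      _ = G * w + ε * (w * (10 * G + (1 + 10 * ε))) := by ring
      _ ≤ G * w + ε * (S * (10 * M + 6)) := by gcongr; linarith
      _ ≤ _ := by linarith
  have q2 : (G + ε) * (1 + 2 * ε) ^ 2 * (2 * r) ≤ η / 8 * d := by
    have := hr2
    rw [lt_div_iff₀ (by positivity)] at this
    calc (G + ε) * (1 + 2 * ε) ^ 2 * (2 * r) ≤ (M + 1) * 4 * (2 * r) := by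
          gcongr; linarith
      _ = r * (8 * (M + 1)) := by ring
      _ ≤ _ := this.le
  have q3 := mul_le_mul_of_nonneg_right q1 hd.le
  have q4 : 0 < η * d := by positivity
  apply mul_le_mul_of_nonneg_left _ (by positivity)
  nlinarith

lemma upper_local (γ : ℝ → EuclideanSpace ℝ (Fin 3)) (hd : Differentiable ℝ γ)
    (hc : Continuous (deriv γ)) (hγ' : ∀ s, deriv γ s ≠ 0) (L : ℝ) (hL : 0 < L)
    (g : EuclideanSpace ℝ (Fin 3) → ℝ) (hg : Continuous g)
    (hg0 : ∀ s ∈ Set.Icc 0 L, 0 ≤ g (γ s)) (η : ℝ) (hη : 0 < η) :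
    ∃ δ > 0, ∀ a b, 0 ≤ a → a < b → b ≤ L → b - a ≤ δ → ∀ᶠ r in 𝓝[>] (0:ℝ),
      ∫ x in Metric.cthickening r (γ '' Set.Icc a b), g x ≤
        Real.pi * r ^ 2 * ((∫ s in a..b, g (γ s) * ‖deriv γ s‖) + η * (b - a)) := by
  obtain ⟨m, hm, S, hS, hmS⟩ := speed_bounds γ hc hγ' L hL
  obtain ⟨M, hM, hgM⟩ : ∃ M > 0, ∀ s ∈ Set.Icc 0 L, g (γ s) ≤ M := by
    obtain ⟨y, hy, hy'⟩ := isCompact_Icc.exists_isMaxOn (Set.nonempty_Icc.2 hL.le)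
      (hg.comp hd.continuous).continuousOn
    exact ⟨max 1 (g (γ y)), by positivity, fun s hs => (hy' hs).trans (le_max_right _ _)⟩
  set ε := min (1/2) (η / (8 * (S * (10 * M + 6)))) with hεd
  have hε : 0 < ε := by positivity
  have hε2 : ε ≤ 1 / 2 := min_le_left _ _
  have hεS : ε * (S * (10 * M + 6)) ≤ η / 8 := by
    have : ε ≤ η / (8 * (S * (10 * M + 6))) := min_le_right _ _
    rw [le_div_iff₀ (by positivity)] at this
    linarith
  obtain ⟨δ₁, hδ₁, h⟩ := vol_local γ hd hc hγ' L hL ε hε hε2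
  have hgd : Continuous (fun s => g (γ s) * ‖deriv γ s‖) := (hg.comp hd.continuous).mul hc.norm
  obtain ⟨δ₂, hδ₂, h'⟩ := unif_cont (fun s => g (γ s) * ‖deriv γ s‖)
    hgd L (η / 2) (by positivity)
  obtain ⟨δ₃, hδ₃, h''⟩ := unif_cont (fun s => g (γ s))
    (hg.comp hd.continuous) L (ε / 2) (by positivity)
  refine ⟨min δ₁ (min δ₂ δ₃), by positivity, fun a b ha hab hb hba => ?_⟩
  have hb1 : b - a ≤ δ₁ := hba.trans (min_le_left _ _)
  have hb2 : b - a ≤ δ₂ := hba.trans ((min_le_right _ _).trans (min_le_left _ _))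
  have hb3 : b - a ≤ δ₃ := hba.trans ((min_le_right _ _).trans (min_le_right _ _))
  obtain ⟨-, hvol⟩ := h a b ha hab.le hb hb1
  have haI : a ∈ Set.Icc 0 L := ⟨ha, by linarith⟩
  have hK : IsCompact (γ '' Set.Icc a b) := isCompact_Icc.image hd.continuous
  obtain ⟨ρ, hρ, hρs⟩ := hK.exists_cthickening_subset_open
    (isOpen_Iio.preimage hg : IsOpen (g ⁻¹' Set.Iio (g (γ a) + ε))) (by
      rintro _ ⟨s, hs, rfl⟩
      have := h'' a haI s ⟨by linarith [hs.1], by linarith [hs.2]⟩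
        (by rw [abs_of_nonneg (by linarith [hs.1])]; linarith [hs.2])
      rw [Real.norm_eq_abs, abs_le] at this
      simp only [Set.mem_preimage, Set.mem_Iio]
      linarith [this.2])
  have hint : (g (γ a) * ‖deriv γ a‖ - η / 2) * (b - a) ≤
      ∫ s in a..b, g (γ s) * ‖deriv γ s‖ := by
    apply le_int _ hgd _ _ _ hab.le
    intro s hs
    have := h' a haI s ⟨by linarith [hs.1], by linarith [hs.2]⟩
        (by rw [abs_of_nonneg (by linarith [hs.1])]; linarith [hs.2])
    rw [Real.norm_eq_abs, abs_le] at this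
    linarith [this.1]
  have hba0 : 0 < b - a := by linarith
  have hρ' : 0 < η / 8 * (b - a) / (8 * (M + 1)) := by positivity
  filter_upwards [self_mem_nhdsWithin, Ioo_mem_nhdsGT hρ, Ioo_mem_nhdsGT hρ'] with r hr hr1 hr2
  have hr0 : 0 < r := hr
  have s1 : ∫ x in Metric.cthickening r (γ '' Set.Icc a b), g x ≤
      (g (γ a) + ε) * volume.real (Metric.cthickening r (γ '' Set.Icc a b)) := by
    have hkc : IsCompact (Metric.cthickening r (γ '' Set.Icc a b)) := hK.cthickening
    have := setIntegral_mono_on (μ := volume) (hg.continuousOn.integrableOn_compact hkc)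
      (continuousOn_const.integrableOn_compact hkc) hkc.measurableSet
      (g := fun _ => g (γ a) + ε) (fun x hx =>
        (hρs (Metric.cthickening_mono hr1.2.le _ hx) : g x < g (γ a) + ε).le)
    rw [setIntegral_const, smul_eq_mul] at this
    linarith
  refine s1.trans ?_
  exact upper_arith ε η S M (g (γ a)) ‖deriv γ a‖ (b - a) r _ _ hε hε2 hη hS hM hεS (hg0 a haI)
    (hgM a haI) (norm_nonneg _) (hmS a haI).2 hba0 hr0 hr2.2 (hvol r hr).2 hint

lemma upper_global (γ : ℝ → EuclideanSpace ℝ (Fin 3)) (hd : Differentiable ℝ γ)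
    (hc : Continuous (deriv γ)) (hγ' : ∀ s, deriv γ s ≠ 0) (L : ℝ) (hL : 0 < L)
    (g : EuclideanSpace ℝ (Fin 3) → ℝ) (hg : Continuous g)
    (hg0 : ∀ x ∈ Metric.cthickening 1 (γ '' Set.Icc 0 L), 0 ≤ g x) (η : ℝ) (hη : 0 < η) :
    ∀ᶠ r in 𝓝[>] (0:ℝ),
      ∫ x in Metric.cthickening r (γ '' Set.Icc 0 L), g x ≤
        Real.pi * r ^ 2 * ((∫ s in (0:ℝ)..L, g (γ s) * ‖deriv γ s‖) + η) := by
  obtain ⟨δ, hδ, h⟩ := upper_local γ hd hc hγ' L hL g hg (fun s hs => hg0 _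
    (Metric.self_subset_cthickening _ (Set.mem_image_of_mem _ hs))) (η / L) (by positivity)
  have key : ∀ k : ℕ, ∀ a b, 0 ≤ a → a < b → b ≤ L → b ≤ a + (k + 1) * δ →
      ∀ᶠ r in 𝓝[>] (0:ℝ),
      ∫ x in Metric.cthickening r (γ '' Set.Icc a b), g x ≤
        Real.pi * r ^ 2 * ((∫ s in a..b, g (γ s) * ‖deriv γ s‖) + η / L * (b - a)) := by
    intro k
    induction k with
    | zero =>
      intro a b ha hab hb hba
      exact h a b ha hab hb (by push_cast at hba; linarith)
    | succ k ih =>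
      intro a b ha hab hb hba
      push_cast at hba
      rcases le_or_gt b (a + (k + 1) * δ) with hle | hle
      · exact ih a b ha hab hb hle
      set c := a + (k + 1) * δ with hcd
      have hac : a < c := by
        have : 0 < ((k : ℝ) + 1) * δ := by positivity
        rw [hcd]; linarith
      filter_upwards [ih a c ha hac (by linarith) le_rfl,
        h c b (by linarith) hle hb (by rw [hcd]; linarith),
        Ioo_mem_nhdsGT one_pos] with r h1 h2 hr
      have hgd : Continuous (fun s => g (γ s) * ‖deriv γ s‖) := (hg.comp hd.continuous).mul hc.norm
      have e1 := intervalIntegral.integral_add_adjacent_intervals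
        (hgd.intervalIntegrable (μ := volume) a c) (hgd.intervalIntegrable c b)
      have hU : Metric.cthickening r (γ '' Set.Icc a b) =
          Metric.cthickening r (γ '' Set.Icc a c) ∪ Metric.cthickening r (γ '' Set.Icc c b) := by
        rw [← Metric.cthickening_union, ← Set.image_union, Set.Icc_union_Icc_eq_Icc hac.le hle.le]
      have hk : ∀ x y, IsCompact (Metric.cthickening r (γ '' Set.Icc x y)) :=
        fun x y => (isCompact_Icc.image hd.continuous).cthickening
      have hI : ∀ x y, IntegrableOn g (Metric.cthickening r (γ '' Set.Icc x y)) :=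
        fun x y => hg.continuousOn.integrableOn_compact (hk x y)
      have h3 : ∫ x in Metric.cthickening r (γ '' Set.Icc a b), g x ≤
          (∫ x in Metric.cthickening r (γ '' Set.Icc a c), g x) +
          ∫ x in Metric.cthickening r (γ '' Set.Icc c b), g x := by
        rw [hU, ← Set.union_sdiff_self, setIntegral_union Set.disjoint_sdiff_right
          ((hk _ _).measurableSet.diff (hk _ _).measurableSet) (hI _ _)
          ((hI _ _).mono_set Set.sdiff_subset)]
        refine add_le_add le_rfl (setIntegral_mono_set (hI _ _) ?_
          (LE.le.eventuallyLE Set.sdiff_subset))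
        refine (ae_restrict_iff' (hk _ _).measurableSet).2 (Eventually.of_forall fun x hx => ?_)
        refine hg0 x (Metric.cthickening_mono hr.2.le _
          (Metric.cthickening_subset_of_subset _ (Set.image_mono
            (Set.Icc_subset_Icc (by linarith) hb)) hx))
      refine h3.trans ((add_le_add h1 h2).trans (le_of_eq ?_))
      rw [← e1]; ring
  obtain ⟨k, hk⟩ := exists_nat_ge (L / δ)
  rw [div_le_iff₀ hδ] at hk
  have := key k 0 L le_rfl hL le_rfl (by linarith)
  have e : η / L * (L - 0) = η := by field_simp; ring
  rwa [e] at this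

/-- Formula (5.3): the directional semiderivative of `J₁(Ω) = ∫_Ω f` with respect to the
Delfour dilation of a closed `C²` curve `γ`, with path parameter `t = π r²`, equals
minus the line integral of `f` along `γ`. -/
theorem stmt_5 (L : ℝ) (hL : 0 < L) (γ : ℝ → EuclideanSpace ℝ (Fin 3))
    (hγ : ContDiff ℝ 2 γ) (hper : Function.Periodic γ L)
    (hinj : Set.InjOn γ (Set.Ico 0 L)) (hγ' : ∀ s, deriv γ s ≠ 0)
    (Ω : Set (EuclideanSpace ℝ (Fin 3))) (hΩ : IsOpen Ω)
    (hΓΩ : γ '' Set.Ico 0 L ⊆ Ω)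
    (f : EuclideanSpace ℝ (Fin 3) → ℝ) (hf : Continuous f)
    (hfi : IntegrableOn f Ω) :
    Tendsto
      (fun r : ℝ =>
        ((∫ x in Ω \ {x | Metric.infDist x (γ '' Set.Ico 0 L) ≤ r}, f x) -
            ∫ x in Ω, f x) / (Real.pi * r ^ 2))
      (𝓝[>] 0)
      (𝓝 (-∫ s in (0:ℝ)..L, f (γ s) * ‖deriv γ s‖)) := by
  have hd : Differentiable ℝ γ := hγ.differentiable (by norm_num)
  have hc : Continuous (deriv γ) := hγ.continuous_deriv (by norm_num)
  have hΓ : γ '' Set.Ico 0 L = γ '' Set.Icc 0 L := by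
    apply Set.Subset.antisymm (Set.image_mono Set.Ico_subset_Icc_self)
    rintro _ ⟨s, hs, rfl⟩
    rcases hs.2.lt_or_eq with h | h
    · exact ⟨s, ⟨hs.1, h⟩, rfl⟩
    · refine ⟨0, ⟨le_rfl, hL⟩, ?_⟩
      rw [h]
      simpa using (hper 0).symm
  have hne : (γ '' Set.Icc 0 L).Nonempty := ⟨γ 0, 0, ⟨le_rfl, hL.le⟩, rfl⟩
  have hK : IsCompact (γ '' Set.Icc 0 L) := isCompact_Icc.image hd.continuous
  rw [hΓ] at hΓΩ ⊢
  have hset : ∀ r > 0, {x | Metric.infDist x (γ '' Set.Icc 0 L) ≤ r} =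
      Metric.cthickening r (γ '' Set.Icc 0 L) := by
    intro r hr
    ext x
    rw [Metric.mem_cthickening_iff, Set.mem_ofPred_eq, Metric.infDist,
      ENNReal.le_ofReal_iff_toReal_le (Metric.infEDist_ne_top hne) hr.le]
  obtain ⟨ρ, hρ, hρΩ⟩ := hK.exists_cthickening_subset_open hΩ hΓΩ
  obtain ⟨M, hM⟩ := (hK.cthickening (r := 1)).exists_bound_of_continuousOn hf.continuousOn
  have hfd : Continuous (fun s => f (γ s) * ‖deriv γ s‖) := (hf.comp hd.continuous).mul hc.norm
  have hM0 : 0 ≤ M := (norm_nonneg _).trans (hM (γ 0)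
    (Metric.self_subset_cthickening _ ⟨0, ⟨le_rfl, hL.le⟩, rfl⟩))
  rw [Metric.tendsto_nhds]
  intro ε hε
  have hη : 0 < ε / (2 * (M + 1)) := by positivity
  have u1 := upper_global γ hd hc hγ' L hL (fun x => M + f x) (by fun_prop) (fun x hx => by
    have := hM x hx
    rw [Real.norm_eq_abs, abs_le] at this; linarith [this.1]) (ε / 4) (by positivity)
  have u2 := upper_global γ hd hc hγ' L hL (fun x => M - f x) (by fun_prop) (fun x hx => by
    have := hM x hx
    rw [Real.norm_eq_abs, abs_le] at this; linarith [this.2]) (ε / 4) (by positivity)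
  have l1 := lower_total γ hd hc hγ' L hL hinj _ hη
  filter_upwards [u1, u2, l1, Ioo_mem_nhdsGT hρ] with r h1 h2 h3 hr
  have hr0 : 0 < r := hr.1
  have hsub : Metric.cthickening r (γ '' Set.Icc 0 L) ⊆ Ω :=
    (Metric.cthickening_mono hr.2.le _).trans hρΩ
  have hkc : IsCompact (Metric.cthickening r (γ '' Set.Icc 0 L)) := hK.cthickening
  have hfI := hf.continuousOn.integrableOn_compact (μ := volume) hkc
  have hMI : IntegrableOn (fun _ => M) (Metric.cthickening r (γ '' Set.Icc 0 L)) volume :=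
    continuousOn_const.integrableOn_compact hkc
  rw [hset r hr0, setIntegral_sdiff hkc.measurableSet hfi hsub]
  rw [integral_add hMI hfI, setIntegral_const, smul_eq_mul] at h1
  rw [integral_sub hMI hfI, setIntegral_const, smul_eq_mul] at h2
  simp only [add_mul, sub_mul] at h1 h2
  have hMd : Continuous (fun s => M * ‖deriv γ s‖) := continuous_const.mul hc.norm
  rw [intervalIntegral.integral_add (hMd.intervalIntegrable _ _)
    (hfd.intervalIntegrable _ _), intervalIntegral.integral_const_mul] at h1
  rw [intervalIntegral.integral_sub (hMd.intervalIntegrable _ _)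
    (hfd.intervalIntegrable _ _), intervalIntegral.integral_const_mul] at h2
  set I := ∫ s in (0:ℝ)..L, f (γ s) * ‖deriv γ s‖
  set ℓ := ∫ s in (0:ℝ)..L, ‖deriv γ s‖
  set V := volume.real (Metric.cthickening r (γ '' Set.Icc 0 L))
  set J := ∫ x in Metric.cthickening r (γ '' Set.Icc 0 L), f x
  set P := Real.pi * r ^ 2 with hP
  have hP0 : 0 < P := by positivity
  have h4 := mul_le_mul_of_nonneg_left h3 hM0
  have h5 : M * (ε / (2 * (M + 1))) < ε / 2 := by
    rw [mul_div_assoc', div_lt_div_iff₀ (by positivity) (by positivity)]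
    nlinarith
  have h6 := mul_lt_mul_of_pos_left h5 hP0
  have e1 : (∫ x in Ω, f x) - J - (∫ x in Ω, f x) = -J := by ring
  rw [e1, Real.dist_eq, abs_lt]
  have e2 : -J / P - -I = (P * I - J) / P := by field_simp; ring
  rw [e2, lt_div_iff₀ hP0, div_lt_iff₀ hP0]
  constructor <;> nlinarith
end

section
/- Let a, b ∈ ℝ^d with a ≠ 0, let c, e ∈ ℝ, and define the affine functions φ(x) = ⟨a,x⟩ + c and w(x) = ⟨b,x⟩ + e. Let f : ℝ^d → ℝ be continuously differentiable with compact support. Then the function t ↦ ∫_{{x : φ(x) + t w(x) = 0}} f dH^{d−1} (integral over the hyperplane {φ + tw = 0}, defined for all t small enough that a + t b ≠ 0) has derivative at t = 0 equal to −∫_{{x : φ(x) = 0}} ⟨∇f(x), a/‖a‖⟩ · ( w(x)/‖a‖ ) dH^{d−1}(x). -/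
open MeasureTheory RealInnerProductSpace

section aux

variable {E W : Type*} [NormedAddCommGroup E] [InnerProductSpace ℝ E]
  [NormedAddCommGroup W] [InnerProductSpace ℝ W]

lemma aux_norm (ι : W →ₗᵢ[ℝ] E) (n : E) (hn : ‖n‖ = 1) (hι : ∀ v, ⟪n, ι v⟫ = 0) (v : W) (s : ℝ) :
    ‖ι v + s • n‖ ^ 2 = ‖v‖ ^ 2 + s ^ 2 := by
  rw [norm_add_sq_real, inner_smul_right, real_inner_comm, hι, norm_smul, hn, ι.norm_map]
  simp

lemma aux_norm_le (ι : W →ₗᵢ[ℝ] E) (n : E) (hn : ‖n‖ = 1) (hι : ∀ v, ⟪n, ι v⟫ = 0) (v : W) (s : ℝ) :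
    ‖v‖ ≤ ‖ι v + s • n‖ := by
  have := aux_norm ι n hn hι v s
  apply le_of_sq_le_sq _ (norm_nonneg _)
  nlinarith [sq_nonneg s]

/-- the graph map -/
noncomputable def PP (ι : W →ₗᵢ[ℝ] E) (n p b : E) (e : ℝ) (r : ℝ) (v : W) : E :=
  p + (ι v + (r * (⟪b, p + ι v⟫ + e)) • n)

lemma PP_sub (ι : W →ₗᵢ[ℝ] E) (n p b : E) (e : ℝ) (r : ℝ) (v v' : W) :
    PP ι n p b e r v - PP ι n p b e r v' = ι (v - v') + (r * ⟪b, ι (v - v')⟫) • n := by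
  simp only [PP, map_sub, inner_sub_right, inner_add_right]
  module

lemma PP_anti (ι : W →ₗᵢ[ℝ] E) (n p b : E) (e : ℝ) (r : ℝ) (hn : ‖n‖ = 1)
    (hι : ∀ v, ⟪n, ι v⟫ = 0) : AntilipschitzWith 1 (PP ι n p b e r) := by
  apply AntilipschitzWith.of_le_mul_dist
  intro v v'
  rw [dist_eq_norm, dist_eq_norm, PP_sub]
  simpa using aux_norm_le ι n hn hι (v - v') _

lemma PP_lip (ι : W →ₗᵢ[ℝ] E) (n p b : E) (e : ℝ) (r : ℝ) (hn : ‖n‖ = 1)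
    (hι : ∀ v, ⟪n, ι v⟫ = 0) :
    LipschitzWith (Real.toNNReal (1 + (r * ‖b‖) ^ 2)) (PP ι n p b e r) := by
  apply LipschitzWith.of_dist_le_mul
  intro v v'
  rw [dist_eq_norm, dist_eq_norm, PP_sub, Real.coe_toNNReal _ (by positivity)]
  apply le_of_sq_le_sq _ (by positivity)
  rw [aux_norm ι n hn hι]
  have h1 : |⟪b, ι (v - v')⟫| ≤ ‖b‖ * ‖v - v'‖ := by
    have := abs_real_inner_le_norm b (ι (v - v'))
    rwa [ι.norm_map] at this
  have h2 : ⟪b, ι (v - v')⟫ ^ 2 ≤ (‖b‖ * ‖v - v'‖) ^ 2 := by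
    rw [← sq_abs]; gcongr
  have h3 : r ^ 2 * ⟪b, ι (v - v')⟫ ^ 2 ≤ r ^ 2 * (‖b‖ * ‖v - v'‖) ^ 2 := by gcongr
  have h4 : 0 ≤ (r * ‖b‖) ^ 2 * ‖v - v'‖ ^ 2 := by positivity
  have h5 : 0 ≤ ((r * ‖b‖) ^ 2) ^ 2 * ‖v - v'‖ ^ 2 := by positivity
  nlinarith

lemma PP_closed [CompleteSpace W] (ι : W →ₗᵢ[ℝ] E) (n p b : E) (e : ℝ) (r : ℝ) (hn : ‖n‖ = 1)
    (hι : ∀ v, ⟪n, ι v⟫ = 0) : Topology.IsClosedEmbedding (PP ι n p b e r) :=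
  (PP_anti ι n p b e r hn hι).isClosedEmbedding (PP_lip ι n p b e r hn hι).uniformContinuous

lemma PP_norm (ι : W →ₗᵢ[ℝ] E) (n p b : E) (e : ℝ) (r : ℝ) (hn : ‖n‖ = 1)
    (hι : ∀ v, ⟪n, ι v⟫ = 0) (v : W) : ‖v‖ ≤ ‖PP ι n p b e r v‖ + ‖p‖ := by
  have h := aux_norm_le ι n hn hι v (r * (⟪b, p + ι v⟫ + e))
  have h2 : ι v + (r * (⟪b, p + ι v⟫ + e)) • n = PP ι n p b e r v - p := by simp [PP]
  rw [h2] at h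
  exact h.trans (norm_sub_le _ _)

lemma PP_cont (ι : W →ₗᵢ[ℝ] E) (n p b : E) (e : ℝ) (r : ℝ) : Continuous (PP ι n p b e r) := by
  unfold PP
  have := ι.continuous
  fun_prop

/-- derivative under the integral sign -/
lemma deriv_int [FiniteDimensional ℝ W] [MeasurableSpace W] [BorelSpace W] (μ : Measure W)
    [IsFiniteMeasureOnCompacts μ]
    (ι : W →ₗᵢ[ℝ] E) (n p b : E) (e : ℝ) (hn : ‖n‖ = 1)
    (hι : ∀ v, ⟪n, ι v⟫ = 0) (f : E → ℝ) (hf : ContDiff ℝ 1 f) (hfs : HasCompactSupport f) :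
    (∀ r, Integrable (fun v => f (PP ι n p b e r v)) μ) ∧
    (∃ A, ∀ r, ∫ v, |f (PP ι n p b e r v)| ∂μ ≤ A) ∧
    HasDerivAt (fun r => ∫ v, f (PP ι n p b e r v) ∂μ)
      (∫ v, fderiv ℝ f (p + ι v) n * (⟪b, p + ι v⟫ + e) ∂μ) 0 := by
  obtain ⟨R, hR⟩ := hfs.isCompact.isBounded.subset_closedBall (0 : E)
  obtain ⟨M, hM⟩ := hfs.exists_bound_of_continuous hf.continuous
  have hf' : Continuous (fderiv ℝ f) := hf.continuous_fderiv (by norm_num)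
  obtain ⟨M', hM'⟩ := (hfs.fderiv (𝕜 := ℝ)).exists_bound_of_continuous hf'
  have hM'0 : 0 ≤ M' := (norm_nonneg _).trans (hM' 0)
  have hM0 : 0 ≤ M := (norm_nonneg _).trans (hM 0)
  have hιc := ι.continuous
  set K : Set W := Metric.closedBall 0 (R + ‖p‖) with hK
  have hKc : IsCompact K := isCompact_closedBall _ _
  have hout : ∀ r v, v ∉ K → PP ι n p b e r v ∉ tsupport f := by
    intro r v hv h
    apply hv
    have h1 := hR h
    have h2 := PP_norm ι n p b e r hn hι v
    simp only [hK, mem_closedBall_zero_iff] at h1 ⊢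
    linarith
  have hint : ∀ r, Integrable (fun v => f (PP ι n p b e r v)) μ := by
    intro r
    apply (hf.continuous.comp (PP_cont ι n p b e r)).integrable_of_hasCompactSupport
    apply HasCompactSupport.intro hKc
    intro v hv
    exact image_eq_zero_of_notMem_tsupport (f := f) (hout r v hv)
  have hbint : ∀ c : ℝ, Integrable (K.indicator (fun _ => c)) μ := fun c =>
    (integrable_indicator_iff hKc.measurableSet).2
      (integrableOn_const hKc.measure_lt_top.ne)
  refine ⟨hint, ⟨∫ v, K.indicator (fun _ => M) v ∂μ, ?_⟩, ?_⟩
  · intro r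
    apply integral_mono (hint r).abs (hbint M)
    intro v
    by_cases hv : v ∈ K
    · simpa [hv] using hM _
    · simp [hv, image_eq_zero_of_notMem_tsupport (hout r v hv)]
  · obtain ⟨B, hB⟩ := hKc.exists_bound_of_continuousOn
      (f := fun v => ⟪b, p + ι v⟫ + e) (by fun_prop)
    have key := hasDerivAt_integral_of_dominated_loc_of_deriv_le (μ := μ) (x₀ := (0 : ℝ))
      (s := Set.univ) (F := fun r v => f (PP ι n p b e r v))
      (F' := fun r v => fderiv ℝ f (PP ι n p b e r v) n * (⟪b, p + ι v⟫ + e))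
      (bound := K.indicator (fun _ => M' * B)) Filter.univ_mem
      (Filter.Eventually.of_forall fun r => (hint r).aestronglyMeasurable) (hint 0)
      ?_ ?_ (hbint _) ?_
    · simpa [PP] using key.2
    · apply Continuous.aestronglyMeasurable
      have := PP_cont ι n p b e 0
      fun_prop
    · refine Filter.Eventually.of_forall fun v r _ => ?_
      by_cases hv : v ∈ K
      · have h1 := (fderiv ℝ f (PP ι n p b e r v)).le_opNorm n
        rw [hn, mul_one] at h1
        rw [norm_mul, Set.indicator_of_mem hv]
        gcongr
        · exact h1.trans (hM' _)
        · exact hB v hv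
      · have : fderiv ℝ f (PP ι n p b e r v) = 0 := by
          apply image_eq_zero_of_notMem_tsupport
          exact fun h => hout r v hv (tsupport_fderiv_subset ℝ h)
        simp [this, hv]
    · refine Filter.Eventually.of_forall fun v r _ => ?_
      have h1 : HasDerivAt (fun r => PP ι n p b e r v) ((⟪b, p + ι v⟫ + e) • n) r := by
        unfold PP
        have := (((hasDerivAt_id r).mul_const (⟪b, p + ι v⟫ + e)).smul_const n).const_add (ι v)
        simpa using this.const_add p
      have h2 := ((hf.differentiable (by norm_num)) (PP ι n p b e r v)).hasFDerivAt.comp_hasDerivAt r h1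
      have h3 : (fderiv ℝ f (PP ι n p b e r v)) ((⟪b, p + ι v⟫ + e) • n) =
          fderiv ℝ f (PP ι n p b e r v) n * (⟪b, p + ι v⟫ + e) := by
        rw [map_smul, smul_eq_mul, mul_comm]
      rw [h3] at h2
      exact h2

end aux

/-- comparison of integrals -/
lemma int_compare {W : Type*} [MeasurableSpace W] (μ ν : Measure W) (C : ℝ) (hC : 0 ≤ C)
    (h1 : μ ≤ ν) (h2 : ν ≤ ENNReal.ofReal C • μ) (g : W → ℝ) (hg : Integrable g μ) :
    |∫ v, g v ∂ν - ∫ v, g v ∂μ| ≤ (C - 1) * ∫ v, |g v| ∂μ := by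
  have hgC : Integrable g (ENNReal.ofReal C • μ) := hg.smul_measure (by simp)
  have hgν : Integrable g ν := hgC.mono_measure h2
  have key : ∀ u : W → ℝ, (∀ v, 0 ≤ u v) → Integrable u μ → Integrable u ν →
      Integrable u (ENNReal.ofReal C • μ) →
      ∫ v, u v ∂μ ≤ ∫ v, u v ∂ν ∧ ∫ v, u v ∂ν ≤ C * ∫ v, u v ∂μ := by
    intro u hu i1 i2 i3
    refine ⟨integral_mono_measure h1 (Filter.Eventually.of_forall hu) i2, ?_⟩
    have := integral_mono_measure h2 (Filter.Eventually.of_forall hu) i3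
    simpa [integral_smul_measure, hC] using this
  obtain ⟨p1, p2⟩ := key (fun v => max (g v) 0) (fun v => le_max_right _ _) hg.pos_part hgν.pos_part hgC.pos_part
  obtain ⟨q1, q2⟩ := key (fun v => max (-g v) 0) (fun v => le_max_right _ _) hg.neg_part hgν.neg_part hgC.neg_part
  have e1 : ∀ v, g v = max (g v) 0 - max (-g v) 0 := fun v => by
    rcases le_total 0 (g v) with h | h <;> simp [h]
  have e2 : ∀ v, |g v| = max (g v) 0 + max (-g v) 0 := fun v => by
    rcases le_total 0 (g v) with h | h <;> simp [h, abs_of_nonneg, abs_of_nonpos]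
  have E1 : ∫ v, g v ∂μ = ∫ v, max (g v) 0 ∂μ - ∫ v, max (-g v) 0 ∂μ := by
    rw [← integral_sub hg.pos_part hg.neg_part]; exact integral_congr_ae (Filter.Eventually.of_forall e1)
  have E2 : ∫ v, g v ∂ν = ∫ v, max (g v) 0 ∂ν - ∫ v, max (-g v) 0 ∂ν := by
    rw [← integral_sub hgν.pos_part hgν.neg_part]; exact integral_congr_ae (Filter.Eventually.of_forall e1)
  have E3 : ∫ v, |g v| ∂μ = ∫ v, max (g v) 0 ∂μ + ∫ v, max (-g v) 0 ∂μ := by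
    rw [← integral_add hg.pos_part hg.neg_part]; exact integral_congr_ae (Filter.Eventually.of_forall e2)
  rw [E1, E2, E3, abs_le]
  constructor <;> nlinarith

section meas
variable {E W : Type*} [NormedAddCommGroup E] [InnerProductSpace ℝ E]
  [NormedAddCommGroup W] [InnerProductSpace ℝ W] [CompleteSpace W]
  [MeasurableSpace W] [BorelSpace W] [MeasurableSpace E] [BorelSpace E]

lemma comap_bounds (m : ℕ) (ι : W →ₗᵢ[ℝ] E) (n p b : E) (e : ℝ) (r : ℝ) (hn : ‖n‖ = 1)
    (hι : ∀ v, ⟪n, ι v⟫ = 0) :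
    (μH[(m : ℝ)] : Measure W) ≤ (μH[(m : ℝ)] : Measure E).comap (PP ι n p b e r) ∧
    (μH[(m : ℝ)] : Measure E).comap (PP ι n p b e r) ≤
      ENNReal.ofReal ((1 + (r * ‖b‖) ^ 2) ^ m) • (μH[(m : ℝ)] : Measure W) := by
  have hm := (PP_closed ι n p b e r hn hι).measurableEmbedding
  constructor
  · refine Measure.le_iff.2 fun s hs => ?_
    rw [hm.comap_apply]
    simpa using (PP_anti ι n p b e r hn hι).le_hausdorffMeasure_image (Nat.cast_nonneg m) s
  · refine Measure.le_iff.2 fun s hs => ?_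
    rw [hm.comap_apply]
    have := (PP_lip ι n p b e r hn hι).hausdorffMeasure_image_le (Nat.cast_nonneg m) s
    rw [ENNReal.rpow_natCast] at this
    rw [ENNReal.ofReal_pow (by positivity)]
    exact this

lemma comap_int (m : ℕ) (ι : W →ₗᵢ[ℝ] E) (n p b : E) (e : ℝ) (r : ℝ) (hn : ‖n‖ = 1)
    (hι : ∀ v, ⟪n, ι v⟫ = 0) (g : E → ℝ) :
    ∫ x in Set.range (PP ι n p b e r), g x ∂μH[(m : ℝ)] =
      ∫ v, g (PP ι n p b e r v) ∂((μH[(m : ℝ)] : Measure E).comap (PP ι n p b e r)) := by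
  have hm := (PP_closed ι n p b e r hn hι).measurableEmbedding
  rw [← hm.map_comap, hm.integral_map]

lemma range_PP (ι : W →ₗᵢ[ℝ] E) (a b : E) (ha : a ≠ 0) (c e : ℝ)
    (hι : ∀ v, ⟪‖a‖⁻¹ • a, ι v⟫ = 0) (hs : ∀ x, ⟪a, x⟫ = 0 → ∃ v, ι v = x) (t : ℝ)
    (ht : ‖a‖ + t * ⟪b, ‖a‖⁻¹ • a⟫ ≠ 0) :
    {x | (⟪a, x⟫ + c) + t * (⟪b, x⟫ + e) = 0} =
      Set.range (PP ι (‖a‖⁻¹ • a) (-(c / ‖a‖) • ‖a‖⁻¹ • a) b e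
        (-t / (‖a‖ + t * ⟪b, ‖a‖⁻¹ • a⟫))) := by
  have ha0 : ‖a‖ ≠ 0 := norm_ne_zero_iff.2 ha
  set n := ‖a‖⁻¹ • a with hn
  have han : a = ‖a‖ • n := by rw [hn, smul_inv_smul₀ ha0]
  have hnn : ⟪n, n⟫ = 1 := by
    rw [real_inner_self_eq_norm_sq, hn, norm_smul]; simp [ha0]
  have hai : ∀ x, ⟪a, x⟫ = ‖a‖ * ⟪n, x⟫ := fun x => by
    conv_lhs => rw [han]
    rw [real_inner_smul_left]
  set κ := ⟪b, n⟫ with hκ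
  set A := ‖a‖ with hA
  ext x
  simp only [Set.mem_ofPred_eq, Set.mem_range, PP]
  constructor
  · intro hx
    obtain ⟨v, hv⟩ := hs (x - ⟪n, x⟫ • n) (by
      rw [hai, inner_sub_right, inner_smul_right, hnn]; ring)
    refine ⟨v, ?_⟩
    rw [hv]
    have hc : -t / (A + t * κ) * (⟪b, -(c / A) • n + (x - ⟪n, x⟫ • n)⟫ + e)
        = ⟪n, x⟫ + c / A := by
      simp only [inner_add_right, inner_sub_right, inner_smul_right, ← hκ]
      rw [hai] at hx
      field_simp
      linear_combination -A * hx
    rw [hc]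
    module
  · rintro ⟨v, rfl⟩
    simp only [hai, inner_add_right, inner_smul_right, hι, hnn, ← hκ]
    field_simp
    ring

end meas

/-- Hyperplane instance of Theorem 5.2/6.11: for the level-set perturbation
`φ_t = φ + t w` with affine `φ(x) = ⟨a,x⟩ + c`, `w(x) = ⟨b,x⟩ + e`, `a ≠ 0`, the
derivative at `t = 0` of `t ↦ ∫_{{φ_t = 0}} f dH^{d-1}` is
`-∫_{{φ = 0}} ⟨∇f, a/‖a‖⟩ · w/‖a‖ dH^{d-1}`. -/
theorem stmt_10 (d : ℕ) (a b : EuclideanSpace ℝ (Fin d)) (ha : a ≠ 0) (c e : ℝ)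
    (f : EuclideanSpace ℝ (Fin d) → ℝ) (hf : ContDiff ℝ 1 f)
    (hfs : HasCompactSupport f) :
    HasDerivAt
      (fun t : ℝ =>
        ∫ x in {x | (⟪a, x⟫ + c) + t * (⟪b, x⟫ + e) = 0}, f x ∂(μH[(d : ℝ) - 1]))
      (-∫ x in {x | ⟪a, x⟫ + c = 0},
          ⟪gradient f x, ‖a‖⁻¹ • a⟫ * ((⟪b, x⟫ + e) / ‖a‖) ∂(μH[(d : ℝ) - 1]))
      0 := by
  obtain _ | m := d
  · exact absurd (Subsingleton.elim a 0) ha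
  have hd : ((m + 1 : ℕ) : ℝ) - 1 = (m : ℝ) := by push_cast; ring
  rw [hd]
  have ha0 : ‖a‖ ≠ 0 := norm_ne_zero_iff.2 ha
  -- the isometry
  obtain ⟨ι, hιa, hs⟩ : ∃ ι : EuclideanSpace ℝ (Fin m) →ₗᵢ[ℝ] EuclideanSpace ℝ (Fin (m + 1)),
      (∀ v, ⟪a, ι v⟫ = 0) ∧ ∀ x, ⟪a, x⟫ = 0 → ∃ v, ι v = x := by
    haveI : Fact (Module.finrank ℝ (EuclideanSpace ℝ (Fin (m + 1))) = m + 1) := ⟨by simp⟩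
    have B := OrthonormalBasis.fromOrthogonalSpanSingleton (𝕜 := ℝ) m ha
    refine ⟨(ℝ ∙ a)ᗮ.subtypeₗᵢ.comp B.repr.symm.toLinearIsometry, ?_, ?_⟩
    · intro v
      exact Submodule.mem_orthogonal_singleton_iff_inner_right.1 (B.repr.symm v).2
    · intro x hx
      refine ⟨B.repr ⟨x, Submodule.mem_orthogonal_singleton_iff_inner_right.2 hx⟩, ?_⟩
      simp
  have hι : ∀ v, ⟪‖a‖⁻¹ • a, ι v⟫ = 0 := fun v => by rw [real_inner_smul_left, hιa, mul_zero]
  have hn : ‖‖a‖⁻¹ • a‖ = 1 := by rw [norm_smul]; simp [ha0]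
  have hrange := range_PP ι a b ha c e hι hs
  set n := ‖a‖⁻¹ • a with hndef
  set p := -(c / ‖a‖) • n with hp
  set κ := ⟪b, n⟫ with hκ
  haveI : IsFiniteMeasureOnCompacts (μH[(m : ℝ)] : Measure (EuclideanSpace ℝ (Fin m))) := by
    have h := isAddHaarMeasure_hausdorffMeasure (E := EuclideanSpace ℝ (Fin m))
    rw [finrank_euclideanSpace_fin] at h
    infer_instance
  set μ := (μH[(m : ℝ)] : Measure (EuclideanSpace ℝ (Fin m))) with hμ
  obtain ⟨hint, ⟨A, hA⟩, hder⟩ := deriv_int μ ι n p b e hn hι f hf hfs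
  -- the limit integral
  have hrhs : -∫ x in {x | ⟪a, x⟫ + c = 0}, ⟪gradient f x, n⟫ * ((⟪b, x⟫ + e) / ‖a‖) ∂(μH[(m : ℝ)])
      = (∫ v, fderiv ℝ f (p + ι v) n * (⟪b, p + ι v⟫ + e) ∂μ) * (-1 / ‖a‖) := by
    have h0 := hrange 0 (by simpa using ha0)
    simp only [zero_mul, add_zero, neg_zero, zero_div] at h0
    have hcm : (μH[(m : ℝ)] : Measure (EuclideanSpace ℝ (Fin (m+1)))).comap (PP ι n p b e 0) = μ := by
      obtain ⟨h1, h2⟩ := comap_bounds m ι n p b e 0 hn hι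
      refine le_antisymm ?_ h1
      simpa using h2
    rw [h0, comap_int m ι n p b e 0 hn hι, hcm, ← integral_neg, ← integral_mul_const]
    congr 1
    ext v
    have : ∀ x, ⟪gradient f x, n⟫ = fderiv ℝ f x n := fun x => by
      simp [gradient]
    rw [this]
    simp only [PP, zero_mul, zero_smul, add_zero]
    ring
  rw [hrhs]
  set q : ℝ → ℝ := fun t => -t / (‖a‖ + t * κ) with hq
  have hq0 : q 0 = 0 := by simp [hq]
  have hqd : HasDerivAt q (-1 / ‖a‖) 0 := by
    have h1 : HasDerivAt (fun t : ℝ => ‖a‖ + t * κ) κ 0 := by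
      simpa using ((hasDerivAt_id (0:ℝ)).mul_const κ).const_add ‖a‖
    have := (hasDerivAt_id (0:ℝ)).neg.div h1 (by simpa using ha0)
    refine HasDerivAt.congr_deriv (f := q) this ?_
    simp
    field_simp
  have hmain : HasDerivAt (fun t => ∫ v, f (PP ι n p b e (q t) v) ∂μ)
      ((∫ v, fderiv ℝ f (p + ι v) n * (⟪b, p + ι v⟫ + e) ∂μ) * (-1 / ‖a‖)) 0 := by
    have := HasDerivAt.comp (0:ℝ) (h₂ := fun r => ∫ v, f (PP ι n p b e r v) ∂μ) (by rw [hq0]; exact hder) hqd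
    exact this
  set C : ℝ → ℝ := fun t => (1 + (q t * ‖b‖) ^ 2) ^ m with hC
  have hC0 : C 0 = 1 := by simp [hC, hq0]
  have hCd : HasDerivAt C 0 0 := by
    have := (((hqd.mul_const ‖b‖).pow 2).const_add 1).pow m
    refine HasDerivAt.congr_deriv (f := C) this ?_
    simp [hq0]
  have hnz : ∀ᶠ t : ℝ in nhds 0, ‖a‖ + t * κ ≠ 0 := by
    have hc : ContinuousAt (fun t : ℝ => ‖a‖ + t * κ) 0 := by fun_prop
    exact hc.eventually_ne (by simpa using ha0)
  set I : ℝ → ℝ := fun t =>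
    ∫ x in {x | (⟪a, x⟫ + c) + t * (⟪b, x⟫ + e) = 0}, f x ∂(μH[(m : ℝ)]) with hI
  have hbd : ∀ᶠ t in nhds (0 : ℝ), |I t - ∫ v, f (PP ι n p b e (q t) v) ∂μ| ≤ (C t - 1) * A := by
    filter_upwards [hnz] with t ht
    have h1 : I t = ∫ v, f (PP ι n p b e (q t) v)
        ∂((μH[(m : ℝ)] : Measure (EuclideanSpace ℝ (Fin (m+1)))).comap (PP ι n p b e (q t))) := by
      simp only [hI]
      rw [hrange t ht, comap_int m ι n p b e _ hn hι]
    rw [h1]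
    obtain ⟨h2, h3⟩ := comap_bounds m ι n p b e (q t) hn hι
    have h4 := int_compare μ _ (C t) (by simp only [hC]; positivity) h2 h3 _ (hint (q t))
    refine h4.trans ?_
    have : 0 ≤ C t - 1 := by
      have : 1 ≤ C t := one_le_pow₀ (by nlinarith [sq_nonneg (q t * ‖b‖)])
      linarith
    gcongr
    exact hA _
  have herr : HasDerivAt (fun t => I t - ∫ v, f (PP ι n p b e (q t) v) ∂μ) 0 0 := by
    have hz := hbd.self_of_nhds
    rw [hC0, sub_self, zero_mul] at hz
    have hz' := abs_nonpos_iff.1 hz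
    rw [hasDerivAt_iff_isLittleO] at hCd ⊢
    rw [hz']
    simp only [hC0, smul_zero, sub_zero] at hCd ⊢
    refine Asymptotics.IsBigO.trans_isLittleO (g := fun t => C t - 1) ?_ hCd
    apply Asymptotics.IsBigO.of_bound |A|
    filter_upwards [hbd] with t ht
    rw [Real.norm_eq_abs, Real.norm_eq_abs, ← abs_mul]
    refine ht.trans ((le_abs_self _).trans_eq (by rw [mul_comm]))
  have := herr.add hmain
  rw [zero_add] at this
  refine this.congr_of_eventuallyEq (Filter.Eventually.of_forall fun t => ?_)
  simp
end

section
/- Let U ⊆ ℝ² be open, let X : U → ℝ² be continuously differentiable, and let φ, w : ℝ² → ℝ be continuously differentiable. Assume that φ(X(u,τ)) + τ·w(X(u,τ)) = 0 for all (u,τ) ∈ U, and that ∇φ(X(u,τ)) + τ·∇w(X(u,τ)) ≠ 0 for all (u,τ) ∈ U. Then for every (u,τ) ∈ U: |det DX(u,τ)| = |w(X(u,τ))| · ‖∂_u X(u,τ)‖ / ‖∇φ(X(u,τ)) + τ·∇w(X(u,τ))‖, where DX(u,τ) is the 2×2 Jacobian matrix with columns ∂_u X(u,τ) and ∂_τ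 X(u,τ). -/
open MeasureTheory RealInnerProductSpace

/-- Two-dimensional Jacobian identity (6.19): for a `C¹` parameterization `X(u,τ)` of the
level sets `{φ + τw = 0}`, the Jacobian determinant of `X` satisfies
`|det DX| = |w∘X| ‖∂ᵤX‖ / ‖∇φ∘X + τ ∇w∘X‖`. -/
theorem stmt_11 (U : Set (ℝ × ℝ)) (hU : IsOpen U)
    (X : ℝ × ℝ → EuclideanSpace ℝ (Fin 2)) (hX : ContDiffOn ℝ 1 X U)
    (φ w : EuclideanSpace ℝ (Fin 2) → ℝ) (hφ : ContDiff ℝ 1 φ) (hw : ContDiff ℝ 1 w)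
    (hc : ∀ p ∈ U, φ (X p) + p.2 * w (X p) = 0)
    (hnz : ∀ p ∈ U, gradient φ (X p) + p.2 • gradient w (X p) ≠ 0) :
    ∀ p ∈ U,
      |Matrix.det !![fderiv ℝ X p (1, 0) 0, fderiv ℝ X p (0, 1) 0;
                     fderiv ℝ X p (1, 0) 1, fderiv ℝ X p (0, 1) 1]| =
        |w (X p)| * ‖fderiv ℝ X p (1, 0)‖ /
          ‖gradient φ (X p) + p.2 • gradient w (X p)‖ := by
  intro p hp
  have hXd : HasFDerivAt X (fderiv ℝ X p) p :=
    ((hX.contDiffAt (hU.mem_nhds hp)).differentiableAt (by simp)).hasFDerivAt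
  have hφd : HasFDerivAt φ (fderiv ℝ φ (X p)) (X p) :=
    (hφ.differentiable (by simp) (X p)).hasFDerivAt
  have hwd : HasFDerivAt w (fderiv ℝ w (X p)) (X p) :=
    (hw.differentiable (by simp) (X p)).hasFDerivAt
  have h1 := (hφd.comp p hXd).add ((hasFDerivAt_snd (𝕜 := ℝ) (p := p)).mul (hwd.comp p hXd))
  have h0 : HasFDerivAt (fun _ : ℝ × ℝ => (0 : ℝ)) (0 : ℝ × ℝ →L[ℝ] ℝ) p :=
    hasFDerivAt_const 0 p
  have h2 := h0.congr_of_eventuallyEq (f₁ := fun q => φ (X q) + q.2 * w (X q))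
    (Filter.eventually_of_mem (hU.mem_nhds hp) hc)
  have h3 := h1.unique h2
  have key : ∀ v : ℝ × ℝ,
      inner ℝ (gradient φ (X p) + p.2 • gradient w (X p)) (fderiv ℝ X p v) = - (v.2 * w (X p)) := by
    intro v
    have h4 := congrArg (fun L : ℝ × ℝ →L[ℝ] ℝ => L v) h3
    simp at h4
    rw [inner_add_left, inner_smul_left]
    simp only [gradient, InnerProductSpace.toDual_symm_apply]
    simp
    linarith
  have ha := key (1, 0)
  have hb := key (0, 1)
  have hg := hnz p hp
  generalize gradient φ (X p) + p.2 • gradient w (X p) = g at *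
  generalize fderiv ℝ X p (1, 0) = a at *
  generalize fderiv ℝ X p (0, 1) = b at *
  generalize w (X p) = c at *
  have hg' : 0 < ‖g‖ := norm_pos_iff.mpr hg
  rw [eq_div_iff hg'.ne', ← sq_eq_sq₀ (by positivity) (by positivity), mul_pow, mul_pow,
    sq_abs, sq_abs, EuclideanSpace.real_norm_sq_eq, EuclideanSpace.real_norm_sq_eq,
    Matrix.det_fin_two_of]
  simp [PiLp.inner_apply, Fin.sum_univ_two] at ha hb ⊢
  have e0 : g 0 * (a 0 * b 1 - b 0 * a 1) = a 1 * c := by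
    linear_combination b 1 * ha - a 1 * hb
  have e1 : g 1 * (a 0 * b 1 - b 0 * a 1) = - (a 0 * c) := by
    linear_combination a 0 * hb - b 0 * ha
  linear_combination (g 0 * (a 0 * b 1 - b 0 * a 1) + a 1 * c) * e0 +
    (g 1 * (a 0 * b 1 - b 0 * a 1) - a 0 * c) * e1
end

section
/- Let U ⊆ ℝ³ be open with coordinates (u,v,τ), let X : U → ℝ³ be continuously differentiable, and let φ, w : ℝ³ → ℝ be continuously differentiable. Assume that φ(X(u,v,τ)) + τ·w(X(u,v,τ)) = 0 for all (u,v,τ) ∈ U, and that ∇φ(X(u,v,τ)) + τ·∇w(X(u,v,τ)) ≠ 0 for all (u,v,τ) ∈ U. Then for every (u,v,τ) ∈ U: |det DX(u,v,τ)| = |w(X(u,v,τ))| · ‖∂_u X × ∂_v X‖ / ‖∇φ(X(u,v,τ)) + τ·∇w(X(u,v,τ))‖, where DX is the 3×3 Jacobian matrix with columns ∂_u X, ∂_v X, ∂_τ X, and × denotes the cross product in ℝ³. -/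
open MeasureTheory RealInnerProductSpace

lemma stmt_12_alg (a b c g : EuclideanSpace ℝ (Fin 3)) (W : ℝ) (hg : g ≠ 0)
    (ha : ⟪g, a⟫ = 0) (hb : ⟪g, b⟫ = 0) (hc : ⟪g, c⟫ + W = 0) :
    |Matrix.det !![a 0, b 0, c 0; a 1, b 1, c 1; a 2, b 2, c 2]| =
      |W| * ‖(EuclideanSpace.equiv (Fin 3) ℝ).symm
              (crossProduct (EuclideanSpace.equiv (Fin 3) ℝ a)
                (EuclideanSpace.equiv (Fin 3) ℝ b))‖ / ‖g‖ := by
  have hg' : ‖g‖ ≠ 0 := norm_ne_zero_iff.mpr hg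
  rw [eq_div_iff hg', ← Real.norm_eq_abs, ← Real.norm_eq_abs, ← norm_smul, ← norm_smul,
    ← norm_neg (W • _)]
  congr 1
  simp only [PiLp.inner_apply, Fin.sum_univ_three, RCLike.inner_apply, conj_trivial] at ha hb hc
  ext i
  fin_cases i
  · simp [Matrix.det_fin_three, cross_apply]
    linear_combination (a 1 * b 2 - a 2 * b 1) * hc + c 1 * (a 2 * hb - b 2 * ha)
      - c 2 * (a 1 * hb - b 1 * ha)
  · simp [Matrix.det_fin_three, cross_apply]
    linear_combination (a 2 * b 0 - a 0 * b 2) * hc + c 2 * (a 0 * hb - b 0 * ha)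
      - c 0 * (a 2 * hb - b 2 * ha)
  · simp [Matrix.det_fin_three, cross_apply]
    linear_combination (a 0 * b 1 - a 1 * b 0) * hc + c 0 * (a 1 * hb - b 1 * ha)
      - c 1 * (a 0 * hb - b 0 * ha)

/-- Three-dimensional Jacobian identity (6.19): for a `C¹` parameterization `X(u,v,τ)` of
the level sets `{φ + τw = 0}`, the Jacobian determinant of `X` satisfies
`|det DX| = |w∘X| ‖∂ᵤX × ∂ᵥX‖ / ‖∇φ∘X + τ ∇w∘X‖`. -/
theorem stmt_12 (U : Set (ℝ × ℝ × ℝ)) (hU : IsOpen U)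
    (X : ℝ × ℝ × ℝ → EuclideanSpace ℝ (Fin 3)) (hX : ContDiffOn ℝ 1 X U)
    (φ w : EuclideanSpace ℝ (Fin 3) → ℝ) (hφ : ContDiff ℝ 1 φ) (hw : ContDiff ℝ 1 w)
    (hc : ∀ p ∈ U, φ (X p) + p.2.2 * w (X p) = 0)
    (hnz : ∀ p ∈ U, gradient φ (X p) + p.2.2 • gradient w (X p) ≠ 0) :
    ∀ p ∈ U,
      |Matrix.det !![fderiv ℝ X p (1, 0, 0) 0, fderiv ℝ X p (0, 1, 0) 0, fderiv ℝ X p (0, 0, 1) 0;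
                     fderiv ℝ X p (1, 0, 0) 1, fderiv ℝ X p (0, 1, 0) 1, fderiv ℝ X p (0, 0, 1) 1;
                     fderiv ℝ X p (1, 0, 0) 2, fderiv ℝ X p (0, 1, 0) 2, fderiv ℝ X p (0, 0, 1) 2]| =
        |w (X p)| *
          ‖(EuclideanSpace.equiv (Fin 3) ℝ).symm
              (crossProduct (EuclideanSpace.equiv (Fin 3) ℝ (fderiv ℝ X p (1, 0, 0)))
                (EuclideanSpace.equiv (Fin 3) ℝ (fderiv ℝ X p (0, 1, 0))))‖ /
          ‖gradient φ (X p) + p.2.2 • gradient w (X p)‖ := by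
  intro p hp
  have hXd : HasFDerivAt X (fderiv ℝ X p) p :=
    ((hX.differentiableOn one_ne_zero).differentiableAt (hU.mem_nhds hp)).hasFDerivAt
  have hφd := ((hφ.differentiable one_ne_zero) (X p)).hasGradientAt.hasFDerivAt.comp p hXd
  have hwd := ((hw.differentiable one_ne_zero) (X p)).hasGradientAt.hasFDerivAt.comp p hXd
  have ht : HasFDerivAt (fun q : ℝ × ℝ × ℝ => q.2.2)
      ((ContinuousLinearMap.snd ℝ ℝ ℝ).comp (ContinuousLinearMap.snd ℝ ℝ (ℝ × ℝ))) p :=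
    ((ContinuousLinearMap.snd ℝ ℝ ℝ).comp
      (ContinuousLinearMap.snd ℝ ℝ (ℝ × ℝ))).hasFDerivAt
  have hs := hφd.add (ht.mul hwd)
  have h0 := hs.unique ((hasFDerivAt_const (0 : ℝ) p).congr_of_eventuallyEq
    (Filter.eventuallyEq_of_mem (hU.mem_nhds hp) (fun q hq => hc q hq)))
  have key : ∀ x : ℝ × ℝ × ℝ,
      ⟪gradient φ (X p) + p.2.2 • gradient w (X p), fderiv ℝ X p x⟫ + w (X p) * x.2.2 = 0 := by
    intro x
    have := congrArg (fun L => L x) h0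
    simp at this
    rw [inner_add_left, real_inner_smul_left]
    simp
    linarith
  apply stmt_12_alg _ _ _ _ _ (hnz p hp)
  · simpa using key (1, 0, 0)
  · simpa using key (0, 1, 0)
  · simpa using key (0, 0, 1)
end

section
/- Let v₀, v₁, …, v_d ∈ ℝ^d be affinely independent, let K be the interior of their convex hull, let S be the relative interior of the convex hull of v₁, …, v_d (the open facet opposite v₀), and let w : ℝ^d → ℝ be the affine map determined by w(v₀) = 1 and w(vᵢ) = 0 for i = 1, …, d (the barycentric coordinate of v₀). Let φ : ℝ^d → ℝ be affine, let t > 0, and assume φ(v₀) + τ ≠ 0 for all τ ∈ (0, t]. Define Ŝ = { x ∈ S : φ(x)·(φ(v₀) + t) < 0 } and define X̂ : Ŝ × (0,t) → ℝ^d by X̂(x_S, τ) = x_S − [ φ(x_S) / ( φ(v₀) + τ − φ(x_S) ) ]·(v₀ − x_S). Then: (i) for each τ ∈ (0,t), X̂(·,τ) is a bijection from Ŝ onto { x ∈ K : φ(x) + τ·w(x) = 0 }; and (ii) X̂ is a bijection from Ŝ × (0,t) onto E_t = { x ∈ K : φ(x) < 0 < φ(x) + t·w(x) }. -/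
open Set in
theorem aux_S {d : ℕ} (b : AffineBasis (Fin (d + 1)) ℝ (EuclideanSpace ℝ (Fin d)))
    (x : EuclideanSpace ℝ (Fin d)) :
    x ∈ intrinsicInterior ℝ (convexHull ℝ (Set.range (b ∘ Fin.succ))) ↔
      b.coord 0 x = 0 ∧ ∀ i : Fin d, 0 < b.coord i.succ x := by
  have hspan : ∀ y ∈ affineSpan ℝ (convexHull ℝ (Set.range (b ∘ Fin.succ))), b.coord 0 y = 0 := by
    intro y hy
    rw [affineSpan_convexHull] at hy
    refine affineSpan_induction (p := fun y => b.coord 0 y = 0) hy ?_ ?_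
    · rintro _ ⟨i, rfl⟩
      simp [AffineBasis.coord_apply, (Fin.succ_ne_zero i).symm]
    · intro c u v w hu hv hw
      simp only [AffineMap.map_vadd, map_smul, AffineMap.linearMap_vsub, hu, hv, hw]
      simp
  have hnn : ∀ y ∈ convexHull ℝ (Set.range (b ∘ Fin.succ)), ∀ i, 0 ≤ b.coord i y := by
    intro y hy
    have h2 := convexHull_mono (Set.range_comp_subset_range Fin.succ b) hy
    rw [AffineBasis.convexHull_eq_nonneg_coord] at h2
    exact h2
  have hmem : ∀ y, b.coord 0 y = 0 → (∀ i : Fin d, 0 ≤ b.coord i.succ y) →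
      y ∈ convexHull ℝ (Set.range (b ∘ Fin.succ)) := by
    intro y h0 hp
    have h1 := b.linear_combination_coord_eq_self y
    have h2 := b.sum_coord_apply_eq_one y
    rw [Fin.sum_univ_succ, h0] at h1 h2
    simp only [zero_smul, zero_add] at h1 h2
    rw [← h1]
    exact (convex_convexHull ℝ _).sum_mem (fun i _ => hp i) h2
      (fun i _ => subset_convexHull ℝ _ ⟨i, rfl⟩)
  have hc : ∀ i, Continuous (b.coord i) := fun i => (b.coord i).continuous_of_finiteDimensional
  rw [mem_intrinsicInterior]
  constructor
  · rintro ⟨y, hy, rfl⟩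
    have hy' := interior_subset hy
    refine ⟨hspan _ y.2, fun i => lt_of_le_of_ne (hnn _ hy' _) fun h0 => ?_⟩
    let γ : ℝ → affineSpan ℝ (convexHull ℝ (Set.range (b ∘ Fin.succ))) := fun s =>
      ⟨AffineMap.lineMap (b i.succ) (y : EuclideanSpace ℝ (Fin d)) (1 + s),
        AffineMap.lineMap_mem _ (subset_affineSpan ℝ _ (subset_convexHull ℝ _ ⟨i, rfl⟩)) y.2⟩
    have hγ : Continuous γ := by
      apply Continuous.subtype_mk
      simp only [AffineMap.lineMap_apply]
      fun_prop
    have hγ0 : γ 0 = y := by ext1; simp [γ]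
    have hev : ∀ᶠ s in nhds (0:ℝ), γ s ∈ interior ((↑) ⁻¹' (convexHull ℝ (Set.range (b ∘ Fin.succ)))) :=
      hγ.continuousAt.eventually_mem (isOpen_interior.mem_nhds (by rw [hγ0]; exact hy))
    have hev2 := hev.filter_mono (nhdsWithin_le_nhds (s := Set.Ioi 0))
    obtain ⟨s, hs, hs0⟩ := (hev2.and self_mem_nhdsWithin).exists
    have hs' := interior_subset hs
    have h3 := hnn _ hs' i.succ
    simp only [γ, AffineMap.apply_lineMap, AffineMap.lineMap_apply_ring', ← h0,
      AffineBasis.coord_apply_eq] at h3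
    have : 0 < s := hs0
    linarith
  · rintro ⟨h0, hp⟩
    have hx := hmem x h0 (fun i => (hp i).le)
    refine ⟨⟨x, subset_affineSpan ℝ _ hx⟩, ?_, rfl⟩
    rw [mem_interior]
    refine ⟨⋂ i : Fin d, {y | 0 < b.coord i.succ y}, ?_, ?_, ?_⟩
    · intro y hy
      rw [Set.mem_iInter] at hy
      exact hmem y (hspan _ y.2) (fun i => le_of_lt (hy i))
    · exact isOpen_iInter_of_finite fun i =>
        isOpen_lt continuous_const ((hc _).comp continuous_subtype_val)
    · exact Set.mem_iInter.2 hp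


/-- Lemma 6.5 for a single simplicial element: with the level-set perturbation
`φ_τ = φ + τ w`, where `w` is the barycentric coordinate of the vertex `v₀`, the layer
`E_t = {x ∈ K | φ(x) < 0 < φ(x) + t w(x)}` inside the open simplex `K` is parameterized
by `X̂(x_S, τ) = x_S - [φ(x_S)/(φ(v₀) + τ - φ(x_S))]·(v₀ - x_S)` over the part
`Ŝ = {x ∈ S | φ(x)(φ(v₀)+t) < 0}` of the open facet `S` opposite `v₀`, and each
`X̂(·,τ)` parameterizes the slice `{x ∈ K | φ(x) + τ w(x) = 0}`. -/
theorem stmt_14 (d : ℕ) (v : Fin (d + 1) → EuclideanSpace ℝ (Fin d))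
    (hv : AffineIndependent ℝ v)
    (w φ : EuclideanSpace ℝ (Fin d) →ᵃ[ℝ] ℝ)
    (hw0 : w (v 0) = 1) (hwi : ∀ i : Fin d, w (v i.succ) = 0)
    (t : ℝ) (ht : 0 < t) (hτ : ∀ τ ∈ Set.Ioc (0:ℝ) t, φ (v 0) + τ ≠ 0) :
    (∀ τ ∈ Set.Ioo (0:ℝ) t,
      Set.BijOn (fun xS => xS - (φ xS / (φ (v 0) + τ - φ xS)) • (v 0 - xS))
        {x ∈ intrinsicInterior ℝ (convexHull ℝ (Set.range (v ∘ Fin.succ))) |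
          φ x * (φ (v 0) + t) < 0}
        {x ∈ interior (convexHull ℝ (Set.range v)) | φ x + τ * w x = 0}) ∧
    Set.BijOn (fun q : EuclideanSpace ℝ (Fin d) × ℝ =>
        q.1 - (φ q.1 / (φ (v 0) + q.2 - φ q.1)) • (v 0 - q.1))
      ({x ∈ intrinsicInterior ℝ (convexHull ℝ (Set.range (v ∘ Fin.succ))) |
          φ x * (φ (v 0) + t) < 0} ×ˢ Set.Ioo (0:ℝ) t)
      {x ∈ interior (convexHull ℝ (Set.range v)) | φ x < 0 ∧ 0 < φ x + t * w x} := by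
  have htop : affineSpan ℝ (Set.range v) = ⊤ := by
    rw [hv.affineSpan_eq_top_iff_card_eq_finrank_add_one]; simp
  obtain ⟨b, hb⟩ : ∃ b : AffineBasis (Fin (d + 1)) ℝ (EuclideanSpace ℝ (Fin d)), ⇑b = v :=
    ⟨⟨v, hv, htop⟩, rfl⟩
  subst hb
  have hw : ∀ x, w x = b.coord 0 x := by
    intro x
    have h : w = b.coord 0 := by
      refine AffineMap.ext_on htop ?_
      rintro _ ⟨i, rfl⟩
      refine Fin.cases ?_ (fun i => ?_) i
      · simp [hw0]
      · simp [hwi, AffineBasis.coord_apply, (Fin.succ_ne_zero i).symm]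
    rw [h]
  have hsgn : ∀ τ ∈ Set.Ioo (0:ℝ) t, 0 < (φ (b 0) + τ) * (φ (b 0) + t) := by
    intro τ h
    rcases le_or_gt 0 (φ (b 0)) with h0 | h0
    · exact mul_pos (by linarith [h.1]) (by linarith)
    · have : φ (b 0) + t < 0 := by
        by_contra! hc
        exact hτ (-φ (b 0)) ⟨by linarith, by linarith⟩ (by ring)
      exact mul_pos_of_neg_of_neg (by linarith [h.2]) this
  have key : ∀ x : EuclideanSpace ℝ (Fin d), ∀ c : ℝ,
      x - c • (b 0 - x) = AffineMap.lineMap x (b 0) (-c) := by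
    intro x c
    simp [AffineMap.lineMap_apply]; abel
  have F : ∀ x ∈ intrinsicInterior ℝ (convexHull ℝ (Set.range (b ∘ Fin.succ))),
      φ x * (φ (b 0) + t) < 0 → ∀ τ ∈ Set.Ioo (0:ℝ) t, ∃ σ : ℝ, 0 < σ ∧ σ < 1 ∧
        x - (φ x / (φ (b 0) + τ - φ x)) • (b 0 - x) = AffineMap.lineMap x (b 0) σ ∧
        (AffineMap.lineMap x (b 0) σ : EuclideanSpace ℝ (Fin d)) ∈
          interior (convexHull ℝ (Set.range b)) ∧
        w (AffineMap.lineMap x (b 0) σ) = σ ∧ φ (AffineMap.lineMap x (b 0) σ) = - τ * σ := by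
    intro x hx hφ τ h
    have hs := hsgn τ h
    rw [aux_S] at hx
    have hσ : 0 < -(φ x / (φ (b 0) + τ - φ x)) ∧ -(φ x / (φ (b 0) + τ - φ x)) < 1 ∧
        φ (b 0) + τ - φ x ≠ 0 := by
      rcases lt_or_ge (φ (b 0) + t) 0 with h1 | h1
      · have h2 : φ (b 0) + τ < 0 := by nlinarith
        have h3 : 0 < φ x := by nlinarith
        have h4 : φ (b 0) + τ - φ x < 0 := by linarith
        rw [← neg_div]
        exact ⟨div_pos_of_neg_of_neg (by linarith) h4, by rw [div_lt_one_of_neg h4]; linarith, h4.ne⟩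
      · have h2 : 0 < φ (b 0) + τ := by nlinarith
        have h3 : φ x < 0 := by nlinarith
        have h4 : 0 < φ (b 0) + τ - φ x := by linarith
        rw [← neg_div]
        exact ⟨div_pos (by linarith) h4, by rw [div_lt_one h4]; linarith, h4.ne'⟩
    obtain ⟨p1, p2, p3⟩ := hσ
    refine ⟨_, p1, p2, key _ _, ?_, ?_, ?_⟩
    · generalize -(φ x / (φ (b 0) + τ - φ x)) = σ at *
      rw [AffineBasis.interior_convexHull]
      intro i
      rw [AffineMap.apply_lineMap, AffineMap.lineMap_apply_ring]
      refine Fin.cases ?_ (fun i => ?_) i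
      · simp [hx.1, p1]
      · have := mul_pos (sub_pos.2 p2) (hx.2 i)
        simpa [AffineBasis.coord_apply] using this
    · rw [AffineMap.apply_lineMap, AffineMap.lineMap_apply_ring, hw, hw]
      simp [hx.1]
    · rw [AffineMap.apply_lineMap, AffineMap.lineMap_apply_ring]
      field_simp
      ring
  have G : ∀ p ∈ interior (convexHull ℝ (Set.range b)), ∀ τ ∈ Set.Ioo (0:ℝ) t,
      φ p + τ * w p = 0 → ∃ x ∈ intrinsicInterior ℝ (convexHull ℝ (Set.range (b ∘ Fin.succ))),
      φ x * (φ (b 0) + t) < 0 ∧ x - (φ x / (φ (b 0) + τ - φ x)) • (b 0 - x) = p := by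
    intro p hp τ h hφ
    rw [AffineBasis.interior_convexHull] at hp
    have hp : ∀ i, 0 < b.coord i p := hp
    have hs := hsgn τ h
    have hσ0 : 0 < w p := by rw [hw]; exact hp 0
    have hsum := b.sum_coord_apply_eq_one p
    rw [Fin.sum_univ_succ, ← hw] at hsum
    have hσ1 : w p < 1 := by
      have hnn : 0 ≤ ∑ i : Fin d, b.coord i.succ p := Finset.sum_nonneg fun i _ => (hp _).le
      refine lt_of_le_of_ne (by linarith) fun h1 => ?_
      have hz : ∑ i : Fin d, b.coord i.succ p = 0 := by linarith
      have hz' := (Finset.sum_eq_zero_iff_of_nonneg (fun i _ => (hp _).le)).1 hz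
      have hpb : p = b 0 := by
        have := b.linear_combination_coord_eq_self p
        rw [Fin.sum_univ_succ, ← hw, h1, Finset.sum_eq_zero] at this
        · simpa using this.symm
        · intro i hi; rw [hz' i hi, zero_smul]
      rw [h1, hpb] at hφ
      exact hτ τ ⟨h.1, h.2.le⟩ (by linarith)
    have ha : φ (b 0) + τ ≠ 0 := hτ τ ⟨h.1, h.2.le⟩
    have hwc := hw p
    generalize hσ : w p = σ at *
    have h1σ : 0 < 1 - σ := by linarith
    have hφx : φ (AffineMap.lineMap (b 0) p (1 / (1 - σ))) = - (σ / (1 - σ)) * (φ (b 0) + τ) := by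
      rw [AffineMap.apply_lineMap, AffineMap.lineMap_apply_ring]
      have : φ p = - τ * σ := by linarith
      rw [this]
      field_simp
      ring
    refine ⟨AffineMap.lineMap (b 0) p (1 / (1 - σ)), ?_, ?_, ?_⟩
    · rw [aux_S]
      simp only [AffineMap.apply_lineMap, AffineMap.lineMap_apply_ring]
      refine ⟨?_, fun i => ?_⟩
      · rw [← hwc]; simp; field_simp; ring
      · have := mul_pos (one_div_pos.2 h1σ) (hp i.succ)
        simpa [AffineBasis.coord_apply] using this
    · rw [hφx]
      have := mul_pos (div_pos hσ0 h1σ) hs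
      linarith
    · rw [hφx]
      have : -(σ / (1 - σ)) * (φ (b 0) + τ) /
          (φ (b 0) + τ - -(σ / (1 - σ)) * (φ (b 0) + τ)) = -σ := by
        have e : φ (b 0) + τ - -(σ / (1 - σ)) * (φ (b 0) + τ) = (φ (b 0) + τ) / (1 - σ) := by
          field_simp; ring
        rw [e]; field_simp
      rw [this, AffineMap.lineMap_apply]
      simp only [vsub_eq_sub, vadd_eq_add]
      match_scalars <;> field_simp <;> ring
  have I : ∀ x y : EuclideanSpace ℝ (Fin d), ∀ σ < (1:ℝ),
      (AffineMap.lineMap x (b 0) σ : EuclideanSpace ℝ (Fin d)) = AffineMap.lineMap y (b 0) σ →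
      x = y := by
    intro x y σ h1 h
    rw [AffineMap.lineMap_apply_module, AffineMap.lineMap_apply_module] at h
    exact smul_right_injective _ (sub_pos.2 h1).ne' (add_right_cancel h)
  refine ⟨fun τ h => ⟨?_, ?_, ?_⟩, ?_, ?_, ?_⟩
  · rintro x ⟨hx, hφ⟩
    obtain ⟨σ, s0, s1, e, hK, e1, e2⟩ := F x hx hφ τ h
    simp only [e]
    exact ⟨hK, by rw [e1, e2]; ring⟩
  · rintro x ⟨hx, hφ⟩ y ⟨hy, hφy⟩ hxy
    obtain ⟨σ, s0, s1, e, hK, e1, e2⟩ := F x hx hφ τ h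
    obtain ⟨σ', s0', s1', e', hK', e1', e2'⟩ := F y hy hφy τ h
    simp only [e, e'] at hxy
    have : σ = σ' := by rw [← e1, ← e1', hxy]
    subst this
    exact I _ _ _ s1 hxy
  · rintro p ⟨hp, hφ⟩
    obtain ⟨x, hx, h1, h2⟩ := G p hp τ h hφ
    exact ⟨x, ⟨hx, h1⟩, h2⟩
  · rintro ⟨x, τ⟩ ⟨⟨hx, hφ⟩, h⟩
    obtain ⟨σ, s0, s1, e, hK, e1, e2⟩ := F x hx hφ τ h
    simp only [e]
    refine ⟨hK, ?_, ?_⟩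
    · rw [e2]; have := mul_pos h.1 s0; linarith
    · rw [e1, e2]; have := mul_pos (sub_pos.2 h.2) s0; linarith
  · rintro ⟨x, τ⟩ ⟨⟨hx, hφ⟩, h⟩ ⟨y, τ'⟩ ⟨⟨hy, hφy⟩, h'⟩ hxy
    obtain ⟨σ, s0, s1, e, hK, e1, e2⟩ := F x hx hφ τ h
    obtain ⟨σ', s0', s1', e', hK', e1', e2'⟩ := F y hy hφy τ' h'
    simp only at hxy hx hy hφ hφy
    rw [e, e'] at hxy
    have : σ = σ' := by rw [← e1, ← e1', hxy]
    subst this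
    have h3 : - τ * σ = - τ' * σ := by rw [← e2, ← e2', hxy]
    have h4 := mul_right_cancel₀ s0.ne' h3
    rw [I _ _ _ s1 hxy, neg_injective h4]
  · rintro p ⟨hp, h1, h2⟩
    have hp' := hp
    rw [AffineBasis.interior_convexHull] at hp'
    have hw0 : 0 < w p := by rw [hw]; exact hp' 0
    have h : -φ p / w p ∈ Set.Ioo (0:ℝ) t :=
      ⟨div_pos (by linarith) hw0, by rw [div_lt_iff₀ hw0]; linarith⟩
    obtain ⟨x, hx, h3, h4⟩ := G p hp _ h (by field_simp; ring)
    exact ⟨(x, -φ p / w p), ⟨⟨hx, h3⟩, h⟩, h4⟩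
end

section
/- In ℝ², let L = { x : x₁ = 0 }, K₁ = { x : x₁ ≤ 0 }, K₂ = { x : x₁ ≥ 0 }. Let a₁, a₂, b₁, b₂ ∈ ℝ² and c₁, c₂, e₁, e₂ ∈ ℝ define affine maps φᵢ(x) = ⟨aᵢ,x⟩ + cᵢ and wᵢ(x) = ⟨bᵢ,x⟩ + eᵢ (i = 1,2), and assume φ₁ = φ₂ and w₁ = w₂ on L; write α = ⟨a₁, e₂⟩ = ⟨a₂, e₂⟩ for the common tangential slope along L, and assume a₁ ≠ 0, a₂ ≠ 0, and α ≠ 0. Let p be the unique point of L with φ₁(p) = 0. Let n^S = sign(α)·e₂, let m₁ be the unit vector orthogonal to a₁ with positive first component, and let m₂ be the unit vector orthogonal to a₂ with negative first component. Let f₁, f₂ : ℝ² → ℝ be continuously differentiable with compact support, and for t near 0 define J₂(t) = ∫_{{x ∈ K₁ : φ₁(x) + t·w₁(x) = 0}} f₁ dH¹ + ∫_{{x ∈ K₂ : φ₂(x) + t·w₂(x) = 0}} f₂ dH¹. Then J₂ has derivative at t = 0 equal to −Σ_{i=1,2} ∫_{{x ∈ Kᵢ : φᵢ(x) = 0}}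 ⟨∇fᵢ(x), aᵢ/‖aᵢ‖⟩ · ( wᵢ(x)/‖aᵢ‖ ) dH¹(x) − ⟨ n^S, f₁(p)·m₁ + f₂(p)·m₂ ⟩ · w₁(p)/|α|. -/
open MeasureTheory RealInnerProductSpace

abbrev E2 := EuclideanSpace ℝ (Fin 2)

def gam (k d s : ℝ) : E2 := !₂[s, k * s + d]

lemma sqS (k : ℝ) : 0 < Real.sqrt (1 + k^2) := by positivity

lemma hausd (k d : ℝ) (T : Set ℝ) (hT : MeasurableSet T) (h : E2 → ℝ) :
    ∫ x in {x : E2 | x 0 ∈ T ∧ x 1 = k * x 0 + d}, h x ∂(μH[(1 : ℝ)])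
      = Real.sqrt (1 + k^2) * ∫ s in T, h (gam k d s) := by
  set S := Real.sqrt (1 + k^2) with hS
  have hS0 : 0 < S := sqS k
  have hS2 : S^2 = 1 + k^2 := Real.sq_sqrt (by positivity)
  let ι : ℝ → E2 := fun u => gam k d (S⁻¹ * u)
  have hι : Isometry ι := by
    refine Isometry.of_dist_eq fun u v => ?_
    rw [EuclideanSpace.dist_eq, Real.dist_eq, ← Real.sqrt_sq_eq_abs]
    congr 1
    simp only [Fin.sum_univ_two, Real.dist_eq, sq_abs, ι, gam]
    simp
    have : S⁻¹^2 * S^2 = 1 := by field_simp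
    linear_combination (-(u-v)^2 * S⁻¹^2) * hS2 + (u-v)^2 * this
  have hr : {x : E2 | x 0 ∈ T ∧ x 1 = k * x 0 + d} = {x : E2 | x 0 ∈ T} ∩ Set.range ι := by
    ext x
    simp only [Set.mem_ofPred_eq, Set.mem_inter_iff, Set.mem_range]
    refine and_congr_right fun _ => ⟨fun hx => ⟨S * x 0, ?_⟩, ?_⟩
    · ext i
      fin_cases i <;> simp [ι, gam, hS0.ne', hx]
    · rintro ⟨u, rfl⟩
      simp [ι, gam]
  have hmT : MeasurableSet {x : E2 | x 0 ∈ T} := by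
    have : Measurable fun x : E2 => x 0 := by fun_prop
    exact this hT
  have hce : MeasurableEmbedding ι := hι.isClosedEmbedding.measurableEmbedding
  have hmap := hι.map_hausdorffMeasure (d := 1) (Or.inl zero_le_one)
  rw [hr, ← Measure.restrict_restrict hmT, ← hmap, hce.setIntegral_map, hausdorffMeasure_real,
    ← integral_indicator (hce.measurable hmT), ← integral_indicator hT]
  have := Measure.integral_comp_mul_left (fun s => T.indicator (fun s => h (gam k d s)) s) S⁻¹
  rw [inv_inv, abs_of_pos hS0, smul_eq_mul] at this
  rw [← this]
  rfl


lemma csR (g : E2 → ℝ) (hg : HasCompactSupport g) : ∃ R : ℝ, ∀ k d s, R < |s| → g (gam k d s) = 0 := by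
  obtain ⟨R, hR⟩ := hg.isCompact.isBounded.subset_closedBall 0
  refine ⟨R, fun k d s hs => ?_⟩
  by_contra h
  have h1 := hR (subset_tsupport g h)
  rw [mem_closedBall_zero_iff] at h1
  have h2 := EuclideanSpace.norm_eq (gam k d s)
  have h3 : |s| ≤ ‖gam k d s‖ := by
    have := PiLp.norm_apply_le (gam k d s) 0
    simpa [gam] using this
  linarith

lemma gam_cont (k d : ℝ) : Continuous (gam k d) := by
  unfold gam
  fun_prop

lemma csComp (g : E2 → ℝ) (hg : HasCompactSupport g) (k d : ℝ) :
    HasCompactSupport (fun s => g (gam k d s)) := by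
  obtain ⟨R, hR⟩ := csR g hg
  refine HasCompactSupport.intro (isCompact_Icc (a := -R) (b := R)) fun s hs => hR _ _ _ ?_
  by_contra h
  exact hs (abs_le.mp (not_lt.mp h))

lemma gam_deriv (k d s : ℝ) : HasDerivAt (gam k d) (!₂[1, k] : E2) s := by
  have : gam k d = fun s => s • (!₂[1, k] : E2) + !₂[0, d] := by
    funext s
    ext i
    fin_cases i <;> simp [gam, mul_comm]
  rw [this]
  simpa using ((hasDerivAt_id s).smul_const (!₂[1, k] : E2)).add_const (!₂[0, d] : E2)

lemma gam_contDiff (k d : ℝ) : ContDiff ℝ 1 (gam k d) := by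
  have : gam k d = fun s => s • (!₂[1, k] : E2) + !₂[0, d] := by
    funext s
    ext i
    fin_cases i <;> simp [gam, mul_comm]
  rw [this]
  fun_prop

lemma gam_fderiv (s : ℝ) (q : ℝ × ℝ) : HasFDerivAt (fun q : ℝ × ℝ => gam q.1 q.2 s)
    ((s • ContinuousLinearMap.fst ℝ ℝ ℝ + ContinuousLinearMap.snd ℝ ℝ ℝ).smulRight
      (EuclideanSpace.single 1 1 : E2)) q := by
  have : (fun q : ℝ × ℝ => gam q.1 q.2 s) = fun q =>
      ((s • ContinuousLinearMap.fst ℝ ℝ ℝ + ContinuousLinearMap.snd ℝ ℝ ℝ).smulRight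
      (EuclideanSpace.single 1 1 : E2)) q + !₂[s, 0] := by
    funext s
    ext i
    fin_cases i <;> simp [gam, mul_comm]
  rw [this]
  exact (ContinuousLinearMap.hasFDerivAt _).add_const _

lemma contD (f : E2 → ℝ) (hf : ContDiff ℝ 1 f) (v : E2) : Continuous fun x => fderiv ℝ f x v :=
  (hf.continuous_fderiv one_ne_zero).clm_apply continuous_const

lemma paramInt (T : Set ℝ) (f : E2 → ℝ) (hf : ContDiff ℝ 1 f) (hfs : HasCompactSupport f)
    (k d : ℝ) : IntegrableOn (fun s => (fderiv ℝ f (gam k d s) (EuclideanSpace.single 1 1)) •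
        (s • ContinuousLinearMap.fst ℝ ℝ ℝ + ContinuousLinearMap.snd ℝ ℝ ℝ)) T := by
  refine Integrable.integrableOn (Continuous.integrable_of_hasCompactSupport ?_ ?_)
  · have := (contD f hf (EuclideanSpace.single 1 1)).comp (gam_cont k d)
    exact this.smul (by fun_prop)
  · exact (csComp _ (hfs.fderiv_apply ℝ (EuclideanSpace.single 1 1)) k d).smul_right

lemma boundF (f : E2 → ℝ) (hf : ContDiff ℝ 1 f) (hfs : HasCompactSupport f) :
    ∃ R C : ℝ, ∀ (q : ℝ × ℝ) (s : ℝ),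
      ‖(fderiv ℝ f (gam q.1 q.2 s) (EuclideanSpace.single 1 1)) •
        (s • ContinuousLinearMap.fst ℝ ℝ ℝ + ContinuousLinearMap.snd ℝ ℝ ℝ)‖ ≤
      (Set.Icc (-R) R).indicator (fun _ => C) s := by
  have hcs := hfs.fderiv_apply ℝ (EuclideanSpace.single 1 1)
  have hct := contD f hf (EuclideanSpace.single 1 1)
  obtain ⟨R, hR⟩ := csR _ hcs
  obtain ⟨C, hC⟩ := hcs.exists_bound_of_continuous hct
  have hC0 : 0 ≤ C := (norm_nonneg _).trans (hC 0)
  refine ⟨R, C * (R + 1), fun q s => ?_⟩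
  by_cases hs : |s| ≤ R
  · rw [Set.indicator_of_mem (show s ∈ Set.Icc (-R) R from abs_le.mp hs), norm_smul]
    refine mul_le_mul (hC _) ?_ (norm_nonneg _) hC0
    refine (norm_add_le _ _).trans (add_le_add ?_ (ContinuousLinearMap.norm_snd_le _ _ _))
    rw [norm_smul]
    calc ‖s‖ * _ ≤ ‖s‖ * 1 := by
          gcongr
          exact ContinuousLinearMap.norm_fst_le _ _ _
      _ ≤ R := by simpa using hs
  · have := hR q.1 q.2 s (not_le.mp hs)
    rw [this, zero_smul, norm_zero]
    refine Set.indicator_nonneg (fun x hx => ?_) _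
    have : 0 ≤ R := by linarith [hx.1, hx.2]
    positivity

lemma diffF (f : E2 → ℝ) (hf : ContDiff ℝ 1 f) (q : ℝ × ℝ) (s : ℝ) :
    HasFDerivAt (fun q : ℝ × ℝ => f (gam q.1 q.2 s))
      ((fderiv ℝ f (gam q.1 q.2 s) (EuclideanSpace.single 1 1)) •
        (s • ContinuousLinearMap.fst ℝ ℝ ℝ + ContinuousLinearMap.snd ℝ ℝ ℝ)) q := by
  have h1 := ((hf.differentiable one_ne_zero (gam q.1 q.2 s)).hasFDerivAt).comp q (gam_fderiv s q)
  refine h1.congr_fderiv ?_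
  ext <;> simp [mul_comm]

lemma paramD (T : Set ℝ) (f : E2 → ℝ) (hf : ContDiff ℝ 1 f) (hfs : HasCompactSupport f)
    (k d : ℝ) : HasFDerivAt (fun q : ℝ × ℝ => ∫ s in T, f (gam q.1 q.2 s))
      (∫ s in T, (fderiv ℝ f (gam k d s) (EuclideanSpace.single 1 1)) •
        (s • ContinuousLinearMap.fst ℝ ℝ ℝ + ContinuousLinearMap.snd ℝ ℝ ℝ)) (k, d) := by
  obtain ⟨R, C, hb⟩ := boundF f hf hfs
  have hi : IntegrableOn ((Set.Icc (-R) R).indicator (fun _ => C)) T := by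
    refine Integrable.integrableOn ?_
    rw [integrable_indicator_iff measurableSet_Icc]
    exact continuous_const.integrableOn_Icc
  have hd := diffF f hf
  have hp := paramInt T f hf hfs k d
  have hm : ∀ q : ℝ × ℝ, AEStronglyMeasurable (fun s => f (gam q.1 q.2 s)) (volume.restrict T) :=
    fun q => (hf.continuous.comp (gam_cont q.1 q.2)).aestronglyMeasurable
  have hi0 : IntegrableOn (fun s => f (gam k d s)) T :=
    ((hf.continuous.comp (gam_cont k d)).integrable_of_hasCompactSupport
      (csComp f hfs k d)).integrableOn
  generalize hF : (fun (q : ℝ × ℝ) (s : ℝ) =>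
    (fderiv ℝ f (gam q.1 q.2 s) (EuclideanSpace.single 1 1)) •
        (s • ContinuousLinearMap.fst ℝ ℝ ℝ + ContinuousLinearMap.snd ℝ ℝ ℝ)) = F'
  have hF' : ∀ q s, (fderiv ℝ f (gam q.1 q.2 s) (EuclideanSpace.single 1 1)) •
        (s • ContinuousLinearMap.fst ℝ ℝ ℝ + ContinuousLinearMap.snd ℝ ℝ ℝ) = F' q s :=
    fun q s => by rw [← hF]
  have hF2 : ∀ s, (fderiv ℝ f (gam k d s) (EuclideanSpace.single 1 1)) •
        (s • ContinuousLinearMap.fst ℝ ℝ ℝ + ContinuousLinearMap.snd ℝ ℝ ℝ) = F' (k, d) s :=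
    fun s => hF' (k, d) s
  simp only [hF'] at hd hb
  simp only [hF2] at hp ⊢
  clear hF2 hF' hF
  have hall := hasFDerivAt_integral_of_dominated_of_fderiv_le (𝕜 := ℝ) (μ := volume.restrict T)
    (x₀ := (k, d)) (s := Set.univ) (F := fun (q : ℝ × ℝ) s => f (gam q.1 q.2 s)) (F' := F')
    (bound := (Set.Icc (-R) R).indicator fun _ => C)
    Filter.univ_mem (Filter.Eventually.of_forall hm) hi0 hp.aestronglyMeasurable
    (Filter.Eventually.of_forall fun s q _ => hb q s) hi
    (Filter.Eventually.of_forall fun s q _ => hd q s)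
  exact hall

lemma lineSet (T : Set ℝ) (a : E2) (c : ℝ) (ha : a 1 ≠ 0) :
    {x : E2 | x 0 ∈ T ∧ ⟪a, x⟫ + c = 0} =
      {x : E2 | x 0 ∈ T ∧ x 1 = (-(a 0) / a 1) * x 0 + (-c / a 1)} := by
  ext x
  simp only [Set.mem_ofPred_eq, PiLp.inner_apply, Fin.sum_univ_two]
  refine and_congr_right fun _ => ?_
  simp
  field_simp
  constructor <;> intro h <;> linarith

lemma core (T : Set ℝ) (σ : ℝ) (hT : MeasurableSet T)
    (hI : ∀ u : ℝ → ℝ, ContDiff ℝ 1 u → HasCompactSupport u → ∫ s in T, deriv u s = σ * u 0)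
    (a b p : E2) (c e : ℝ) (ha : a 1 ≠ 0) (hp0 : p 0 = 0) (hp : ⟪a, p⟫ + c = 0)
    (f : E2 → ℝ) (hf : ContDiff ℝ 1 f) (hfs : HasCompactSupport f) :
    HasDerivAt (fun t : ℝ => ∫ x in {x : E2 | x 0 ∈ T ∧ (⟪a, x⟫ + c) + t * (⟪b, x⟫ + e) = 0},
        f x ∂(μH[(1 : ℝ)]))
      (-(∫ x in {x : E2 | x 0 ∈ T ∧ ⟪a, x⟫ + c = 0},
            ⟪gradient f x, ‖a‖⁻¹ • a⟫ * ((⟪b, x⟫ + e) / ‖a‖) ∂(μH[(1 : ℝ)]))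
        + σ * (a 0 / (‖a‖ * |a 1|)) * f p * (⟪b, p⟫ + e)) 0 := by
  set K : ℝ → ℝ := fun t => -(a 0 + t * b 0) / (a 1 + t * b 1) with hK
  set D : ℝ → ℝ := fun t => -(c + t * e) / (a 1 + t * b 1) with hD
  set k := -(a 0) / a 1 with hk
  set d := -c / a 1 with hd
  set k' := -(b 0 + k * b 1) / a 1 with hk'
  set d' := -(e + d * b 1) / a 1 with hd'
  have hK0 : K 0 = k := by simp [hK, hk]
  have hD0 : D 0 = d := by simp [hD, hd]
  have lin : ∀ u v : ℝ, HasDerivAt (fun t : ℝ => u + t * v) v 0 := fun u v => by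
    simpa using ((hasDerivAt_id (0:ℝ)).mul_const v).const_add u
  have hKd : HasDerivAt K k' 0 := by
    have := (lin (a 0) (b 0)).neg.div (lin (a 1) (b 1)) (by simpa using ha)
    refine this.congr_deriv ?_
    simp only [hk', hk]
    simp
    field_simp
    ring
  have hDd : HasDerivAt D d' 0 := by
    have := (lin c e).neg.div (lin (a 1) (b 1)) (by simpa using ha)
    refine this.congr_deriv ?_
    simp only [hd', hd]
    simp
    field_simp
    ring
  set S := Real.sqrt (1 + k^2) with hS
  have hS0 : 0 < S := sqS k
  have hS2 : S^2 = 1 + k^2 := Real.sq_sqrt (by positivity)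
  have hSd : HasDerivAt (fun t => Real.sqrt (1 + (K t)^2)) (k * k' / S) 0 := by
    have h1 : HasDerivAt (fun t => 1 + (K t)^2) (2 * k * k') 0 := by
      have := (hKd.pow 2).const_add 1
      refine this.congr_deriv ?_
      simp [hK0]
    have := h1.sqrt (by positivity)
    refine this.congr_deriv ?_
    rw [hK0, ← hS]
    field_simp
  have hG : HasDerivAt (fun t => ∫ s in T, f (gam (K t) (D t) s))
      (∫ s in T, fderiv ℝ f (gam k d s) (EuclideanSpace.single 1 1) * (k' * s + d')) 0 := by
    have h1 := paramD T f hf hfs k d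
    rw [← hK0, ← hD0] at h1
    have h2 := HasFDerivAt.comp_hasDerivAt (0:ℝ) h1 (hKd.prodMk hDd)
    refine h2.congr_deriv ?_
    rw [hK0, hD0, ContinuousLinearMap.integral_apply (paramInt T f hf hfs k d)]
    refine integral_congr_ae (Filter.Eventually.of_forall fun s => ?_)
    simp
    ring
  have hJ := hSd.mul hG
  have hev : (fun t : ℝ => ∫ x in {x : E2 | x 0 ∈ T ∧ (⟪a, x⟫ + c) + t * (⟪b, x⟫ + e) = 0},
        f x ∂(μH[(1 : ℝ)])) =ᶠ[nhds 0]
      (fun t => Real.sqrt (1 + (K t)^2)) * (fun t => ∫ s in T, f (gam (K t) (D t) s)) := by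
    have : ∀ᶠ t in nhds (0:ℝ), a 1 + t * b 1 ≠ 0 :=
      ((lin (a 1) (b 1)).continuousAt).eventually_ne (by simpa using ha)
    filter_upwards [this] with t ht
    have hs : {x : E2 | x 0 ∈ T ∧ (⟪a, x⟫ + c) + t * (⟪b, x⟫ + e) = 0} =
        {x : E2 | x 0 ∈ T ∧ ⟪a + t • b, x⟫ + (c + t * e) = 0} := by
      ext x
      simp only [Set.mem_ofPred_eq, inner_add_left, real_inner_smul_left]
      refine and_congr_right fun _ => ?_
      constructor <;> intro h <;> linarith
    rw [hs, lineSet T _ _ (by simpa using ht), hausd _ _ _ hT]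
    simp [hK, hD]
  refine (hJ.congr_of_eventuallyEq hev).congr_deriv ?_
  rw [hK0, hD0, lineSet T a c ha, hausd _ _ _ hT, ← hk, ← hd, ← hS]
  have hpg : p = gam k d 0 := by
    ext i
    fin_cases i
    · simpa [gam] using hp0
    · simp [PiLp.inner_apply, Fin.sum_univ_two, hp0] at hp
      simp [gam, hd]
      field_simp
      linarith
  have hw : ∀ s, ⟪b, gam k d s⟫ + e = -(a 1) * (k' * s + d') := fun s => by
    simp [PiLp.inner_apply, Fin.sum_univ_two, gam, hk', hd']
    field_simp
    ring
  have hna : ‖a‖ ^ 2 = (a 0)^2 + (a 1)^2 := by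
    rw [EuclideanSpace.norm_sq_eq]
    simp [Fin.sum_univ_two]
  have hnap : 0 < ‖a‖ := by
    rw [norm_pos_iff]
    rintro rfl
    simp at ha
  have hdec : a = a 0 • (!₂[1, k] : E2) + (‖a‖^2 / a 1) • EuclideanSpace.single 1 1 := by
    ext i
    fin_cases i
    · simp
    · simp [hk, hna]
      field_simp
      ring
  set G := ∫ s in T, f (gam k d s) with hGd
  have hFd : ∀ s, HasDerivAt (fun s => f (gam k d s)) (fderiv ℝ f (gam k d s) !₂[1, k]) s :=
    fun s => ((hf.differentiable one_ne_zero (gam k d s)).hasFDerivAt).comp_hasDerivAt s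
      (gam_deriv k d s)
  have hWd : ∀ s, HasDerivAt (fun s : ℝ => k' * s + d') k' s := fun s => by
    simpa using ((hasDerivAt_id s).const_mul k').add_const d'
  have hFcs := csComp f hfs k d
  have iF : IntegrableOn (fun s => f (gam k d s)) T :=
    ((hf.continuous.comp (gam_cont k d)).integrable_of_hasCompactSupport hFcs).integrableOn
  have iV : ∀ v : E2, IntegrableOn (fun s => fderiv ℝ f (gam k d s) v * (k' * s + d')) T := fun v => by
    refine Integrable.integrableOn (Continuous.integrable_of_hasCompactSupport ?_ ?_)
    · have := (contD f hf v).comp (gam_cont k d)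
      exact this.mul (by fun_prop)
    · exact (csComp _ (hfs.fderiv_apply ℝ v) k d).mul_right
  have hIBP : (∫ s in T, fderiv ℝ f (gam k d s) !₂[1, k] * (k' * s + d')) + k' * G
      = σ * (f p * d') := by
    have h1 := hI (fun s => f (gam k d s) * (k' * s + d'))
      ((hf.comp (gam_contDiff k d)).mul (by fun_prop)) hFcs.mul_right
    rw [hpg]
    simp only [mul_zero, zero_add] at h1
    rw [← h1, hGd, ← integral_const_mul, ← integral_add (iV _) (iF.const_mul k')]
    refine integral_congr_ae (Filter.Eventually.of_forall fun s => ?_)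
    simp only
    have h5 : deriv (fun s => f (gam k d s) * (k' * s + d')) s = _ := ((hFd s).mul (hWd s)).deriv
    rw [h5]
    ring
  have hmain : (∫ s in T, ⟪gradient f (gam k d s), ‖a‖⁻¹ • a⟫ * ((⟪b, gam k d s⟫ + e) / ‖a‖))
      = -(a 1 * a 0 / ‖a‖^2) * (∫ s in T, fderiv ℝ f (gam k d s) !₂[1, k] * (k' * s + d'))
        - ∫ s in T, fderiv ℝ f (gam k d s) (EuclideanSpace.single 1 1) * (k' * s + d') := by
    rw [← integral_const_mul, ← integral_sub ((iV _).const_mul _) (iV _)]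
    refine integral_congr_ae (Filter.Eventually.of_forall fun s => ?_)
    simp only
    have h3 : fderiv ℝ f (gam k d s) a = a 0 * fderiv ℝ f (gam k d s) !₂[1, k] +
        (‖a‖^2 / a 1) * fderiv ℝ f (gam k d s) (EuclideanSpace.single 1 1) := by
      conv_lhs => rw [hdec]
      simp only [map_add, map_smul, smul_eq_mul]
    rw [hw, inner_gradient_left, map_smul, h3, smul_eq_mul]
    field_simp
    ring
  rw [hmain]
  have hpw : ⟪b, p⟫ + e = -(a 1) * d' := by rw [hpg, hw]; ring
  rw [hpw]
  have hSa : S * |a 1| = ‖a‖ := by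
    have : (S * |a 1|)^2 = ‖a‖^2 := by
      rw [mul_pow, sq_abs, hS2, hna, hk]
      field_simp
      ring
    exact (pow_left_inj₀ (by positivity) hnap.le two_ne_zero).mp this
  generalize (∫ s in T, fderiv ℝ f (gam k d s) (EuclideanSpace.single 1 1) * (k' * s + d')) = I2 at *
  generalize (∫ s in T, fderiv ℝ f (gam k d s) !₂[1, k] * (k' * s + d')) = I1 at *
  have hI1 : I1 = σ * (f p * d') - k' * G := by linarith
  have habs : |a 1| ^ 2 = (a 1)^2 := sq_abs _
  have hab0 : 0 < |a 1| := abs_pos.mpr ha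
  have hka : k * a 1 = - a 0 := by rw [hk]; field_simp
  rw [hI1, ← hSa]
  have ha0 : a 0 = - (k * a 1) := by linarith
  rw [ha0]
  have e1 : a 1 * -(k * a 1) / (S * |a 1|)^2 = -k / S^2 := by
    rw [mul_pow, habs]; field_simp
  have e2 : -(k * a 1) / (S * |a 1| * |a 1|) * (- a 1) = k / S := by
    rw [mul_assoc, ← sq, habs]; field_simp
  have e3 : σ * (-(k * a 1) / (S * |a 1| * |a 1|)) * f p * (-(a 1) * d') = σ * f p * d' * (k / S) := by
    rw [← e2]; ring
  rw [e1, e3]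
  field_simp
  ring


/-- Two-element planar instance of Theorem 5.2/6.11 (formula (5.16)): the plane is split
by the mesh face `L = {x₁ = 0}` into `K₁ = {x₁ ≤ 0}`, `K₂ = {x₁ ≥ 0}`; the level-set
function equals the affine `φᵢ(x) = ⟨aᵢ,x⟩ + cᵢ` on `Kᵢ` and the weight equals
`wᵢ(x) = ⟨bᵢ,x⟩ + eᵢ` on `Kᵢ`, continuous across `L`. The derivative at `t = 0` of the
surface integral `J₂(t)` consists of the normal-derivative terms
`-∫ ⟨∇fᵢ, nᵢ⟩ wᵢ/‖aᵢ‖` and the jump term `-⟨n^S, f₁(p)m₁ + f₂(p)m₂⟩ w(p)/|α|` at the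
crossing point `p = ∂Ω ∩ L`. -/
theorem stmt_15
    (a₁ a₂ b₁ b₂ : EuclideanSpace ℝ (Fin 2)) (c₁ c₂ ce₁ ce₂ : ℝ)
    (hφL : ∀ x : EuclideanSpace ℝ (Fin 2), x 0 = 0 → ⟪a₁, x⟫ + c₁ = ⟪a₂, x⟫ + c₂)
    (hwL : ∀ x : EuclideanSpace ℝ (Fin 2), x 0 = 0 → ⟪b₁, x⟫ + ce₁ = ⟪b₂, x⟫ + ce₂)
    (ha₁ : a₁ ≠ 0) (ha₂ : a₂ ≠ 0)
    (hα : ⟪a₁, EuclideanSpace.single 1 (1:ℝ)⟫ = ⟪a₂, EuclideanSpace.single 1 (1:ℝ)⟫)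
    (hα0 : ⟪a₁, EuclideanSpace.single 1 (1:ℝ)⟫ ≠ 0)
    (p : EuclideanSpace ℝ (Fin 2)) (hpL : p 0 = 0) (hpφ : ⟪a₁, p⟫ + c₁ = 0)
    (m₁ m₂ : EuclideanSpace ℝ (Fin 2))
    (hm₁ : ‖m₁‖ = 1 ∧ ⟪a₁, m₁⟫ = 0 ∧ 0 < m₁ 0)
    (hm₂ : ‖m₂‖ = 1 ∧ ⟪a₂, m₂⟫ = 0 ∧ m₂ 0 < 0)
    (f₁ f₂ : EuclideanSpace ℝ (Fin 2) → ℝ)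
    (hf₁ : ContDiff ℝ 1 f₁) (hf₁s : HasCompactSupport f₁)
    (hf₂ : ContDiff ℝ 1 f₂) (hf₂s : HasCompactSupport f₂) :
    HasDerivAt
      (fun t : ℝ =>
        (∫ x in {x : EuclideanSpace ℝ (Fin 2) |
              x 0 ≤ 0 ∧ (⟪a₁, x⟫ + c₁) + t * (⟪b₁, x⟫ + ce₁) = 0},
            f₁ x ∂(μH[(1 : ℝ)])) +
          ∫ x in {x : EuclideanSpace ℝ (Fin 2) |
              0 ≤ x 0 ∧ (⟪a₂, x⟫ + c₂) + t * (⟪b₂, x⟫ + ce₂) = 0},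
            f₂ x ∂(μH[(1 : ℝ)]))
      (-(∫ x in {x : EuclideanSpace ℝ (Fin 2) | x 0 ≤ 0 ∧ ⟪a₁, x⟫ + c₁ = 0},
            ⟪gradient f₁ x, ‖a₁‖⁻¹ • a₁⟫ * ((⟪b₁, x⟫ + ce₁) / ‖a₁‖) ∂(μH[(1 : ℝ)]))
        - (∫ x in {x : EuclideanSpace ℝ (Fin 2) | 0 ≤ x 0 ∧ ⟪a₂, x⟫ + c₂ = 0},
            ⟪gradient f₂ x, ‖a₂‖⁻¹ • a₂⟫ * ((⟪b₂, x⟫ + ce₂) / ‖a₂‖) ∂(μH[(1 : ℝ)]))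
        - ⟪(Real.sign ⟪a₁, EuclideanSpace.single 1 (1:ℝ)⟫) •
              EuclideanSpace.single 1 (1:ℝ),
            f₁ p • m₁ + f₂ p • m₂⟫ *
            ((⟪b₁, p⟫ + ce₁) / |⟪a₁, EuclideanSpace.single 1 (1:ℝ)⟫|))
      0 := by
  simp only [EuclideanSpace.inner_single_right, one_mul, conj_trivial] at hα hα0 ⊢
  have hp2 : ⟪a₂, p⟫ + c₂ = 0 := by rw [← hφL p hpL]; exact hpφ
  have hα2 : a₂ 1 ≠ 0 := by rw [← hα]; exact hα0
  have h1 := core (Set.Iic 0) 1 measurableSet_Iic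
    (fun u hu hc => by rw [hc.integral_Iic_deriv_eq hu, one_mul])
    a₁ b₁ p c₁ ce₁ hα0 hpL hpφ f₁ hf₁ hf₁s
  have h2 := core (Set.Ici 0) (-1) measurableSet_Ici
    (fun u hu hc => by
      rw [integral_Ici_eq_integral_Ioi, hc.integral_Ioi_deriv_eq hu]; ring)
    a₂ b₂ p c₂ ce₂ hα2 hpL hp2 f₂ hf₂ hf₂s
  refine (h1.add h2).congr_deriv ?_
  simp only [Set.mem_Iic, Set.mem_Ici]
  rw [← hwL p hpL, ← hα]
  have key : ∀ (a m : E2) (τ : ℝ), a 1 ≠ 0 → τ^2 = 1 → ‖m‖ = 1 → ⟪a, m⟫ = 0 → 0 < τ * m 0 →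
      (a 1).sign * m 1 = - τ * (a 0 / ‖a‖) := by
    intro a m τ ha hτ hm ham hpos
    have hm2 : (m 0)^2 + (m 1)^2 = 1 := by
      have := EuclideanSpace.norm_sq_eq m
      rw [hm] at this
      simp [Fin.sum_univ_two] at this
      linarith
    have hna : ‖a‖ ^ 2 = (a 0)^2 + (a 1)^2 := by
      rw [EuclideanSpace.norm_sq_eq]
      simp [Fin.sum_univ_two]
    have hnap : 0 < ‖a‖ := by
      rw [norm_pos_iff]
      rintro rfl
      simp at ha
    have ham' : a 0 * m 0 + a 1 * m 1 = 0 := by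
      simp [PiLp.inner_apply, Fin.sum_univ_two] at ham
      linarith
    have h1 : τ * m 0 * ‖a‖ = |a 1| := by
      have : (τ * m 0 * ‖a‖)^2 = |a 1|^2 := by
        rw [mul_pow, mul_pow, hτ, hna, sq_abs]
        linear_combination (a 1)^2 * hm2 + (a 0 * m 0 - a 1 * m 1) * ham'
      exact (pow_left_inj₀ (by positivity) (abs_nonneg _) two_ne_zero).mp this
    have h2 : (a 1).sign * |a 1| = a 1 := by
      rcases lt_or_gt_of_ne ha with h | h
      · rw [Real.sign_of_neg h, abs_of_neg h]; ring
      · rw [Real.sign_of_pos h, abs_of_pos h]; ring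
    have h3 : (a 1).sign * m 1 * ‖a‖ = - τ * a 0 := by
      apply mul_left_cancel₀ ha
      linear_combination (a 1).sign * ‖a‖ * ham' - (a 1).sign * a 0 * τ * h1 - a 0 * τ * h2
        + (a 1).sign * a 0 * m 0 * ‖a‖ * hτ
    rw [← mul_div_assoc, ← h3]
    field_simp
  have k1 := key a₁ m₁ 1 hα0 (by norm_num) hm₁.1 hm₁.2.1 (by linarith [hm₁.2.2])
  have k2 := key a₂ m₂ (-1) hα2 (by norm_num) hm₂.1 hm₂.2.1 (by linarith [hm₂.2.2])
  rw [← hα] at k2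
  have hin : ⟪(a₁ 1).sign • (EuclideanSpace.single 1 (1:ℝ) : E2), f₁ p • m₁ + f₂ p • m₂⟫
      = f₁ p * ((a₁ 1).sign * m₁ 1) + f₂ p * ((a₁ 1).sign * m₂ 1) := by
    simp [PiLp.inner_apply]
    ring
  rw [hin, k1, k2]
  have n1 : ‖a₁‖ ≠ 0 := norm_ne_zero_iff.mpr ha₁
  have n2 : ‖a₂‖ ≠ 0 := norm_ne_zero_iff.mpr ha₂
  have n3 : |a₁ 1| ≠ 0 := abs_ne_zero.mpr hα0
  field_simp
  ring
end
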